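/- arXiv:1611.01313 — 3 statements merged into one kernel-verified Lean document; each statement's English description precedes it below -/
import Mathlib

section
/- Let F be a free group and R, S normal subgroups of F with R ⊆ S. Then, inside ℤ[F], Δ(R)Δ(F)Δ(S)Δ(R) ∩ Δ(R)³ = Δ(R)⁴ + Δ(R)Δ(R ∩ S')Δ(R), where S' is the derived subgroup of S. -/
/-! Group-ring preliminaries: for a subgroup `N` of `F`, `aug N` is the additive
subgroup `Δ(N)` of `ℤ[F]` generated by `{n - 1 : n ∈ N}`, and `augI N = Δ(N)ℤ[F]`
is the corresponding (for normal `N` two-sided) ideal of `ℤ[F]`.  Products of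
submodules are additive spans of products, as in the paper. -/

/-- the augmentation ideal `Δ(N)` of a subgroup `N ≤ F`, inside `ℤ[F]` -/
noncomputable def aug {F : Type} [Group F] (N : Subgroup F) :
    Submodule ℤ (MonoidAlgebra ℤ F) :=
  Submodule.span ℤ {x | ∃ n ∈ N, x = (MonoidAlgebra.of ℤ F n) - 1}

/-- the ideal `𝐧 = Δ(N)ℤ[F]` of `ℤ[F]` -/
noncomputable def augI {F : Type} [Group F] (N : Subgroup F) :
    Submodule ℤ (MonoidAlgebra ℤ F) :=
  aug N * ⊤

/-!
If `R` is free with basis `(bᵢ)`, then the Fox derivatives show that the elements `bᵢ - 1` are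
left linearly independent over `ℤ[F]`.  Hence, if `A` and `B` are additive subgroups of `ℤ[F]`
stable under right multiplication by `R`, then `AΔ(R) = ⨁ᵢ A(bᵢ - 1)`, so
`AΔ(R) ∩ BΔ(R) = (A ∩ B)Δ(R)`; the antipode of `ℤ[F]` gives the same on the left.  Applied on both
sides to `Δ(F)Δ(S)` and `Δ(R)`, this reduces the theorem to
`Δ(F)Δ(S) ∩ Δ(R) = Δ(R)² + Δ(R ∩ S')`.  There, an element of `Δ(R)` is congruent to some `r - 1`
modulo `Δ(R)²`, and the linear map `ℤ[F] → S/S'` sending `f(s - 1)` to the class of `s` vanishes on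
`Δ(F)Δ(S)`, so that `r - 1 ∈ Δ(F)Δ(S)` forces `r ∈ S'`.

Stability of `A` under right multiplication by a subgroup `N` is expressed as `AΔ(N) ⊆ A`.
-/

open MonoidAlgebra groupCohomology

section SpanOfLinearIndependent

variable {k B ι : Type*} [CommSemiring k] [Semiring B] [Algebra k B] {A C : Submodule k B}
  {v : ι → B}

theorem mem_mul_span_range_iff {u : B} :
    u ∈ A * Submodule.span k (Set.range v) ↔
      ∃ α : ι →₀ B, (∀ i, α i ∈ A) ∧ Finsupp.linearCombination B v α = u := by
  constructor
  · intro hu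
    induction hu using Submodule.mul_induction_on' with
    | mem_mul_mem a ha w hw =>
      induction hw using Submodule.span_induction with
      | mem w hw =>
        classical
        obtain ⟨i, rfl⟩ := hw
        refine ⟨.single i a, fun j => ?_, by simp⟩
        rw [Finsupp.single_apply]
        split_ifs
        exacts [ha, A.zero_mem]
      | zero => exact ⟨0, fun _ => A.zero_mem, by simp⟩
      | add w w' _ _ hw hw' =>
        obtain ⟨α, hα, hαw⟩ := hw
        obtain ⟨β, hβ, hβw⟩ := hw'
        exact ⟨α + β, fun i => A.add_mem (hα i) (hβ i), by rw [map_add, hαw, hβw, mul_add]⟩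
      | smul c w _ hw =>
        obtain ⟨α, hα, hαw⟩ := hw
        exact ⟨c • α, fun i => A.smul_mem c (hα i), by
          rw [LinearMap.map_smul_of_tower, hαw, mul_smul_comm]⟩
    | add x _ y _ hx hy =>
      obtain ⟨α, hα, rfl⟩ := hx
      obtain ⟨β, hβ, rfl⟩ := hy
      exact ⟨α + β, fun i => A.add_mem (hα i) (hβ i), map_add _ _ _⟩
  · rintro ⟨α, hα, rfl⟩
    exact Submodule.sum_mem _ fun i _ =>
      Submodule.mul_mem_mul (hα i) (Submodule.subset_span ⟨i, rfl⟩)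

theorem mul_span_range_inf_mul_span_range (hv : LinearIndependent B v) :
    A * Submodule.span k (Set.range v) ⊓ C * Submodule.span k (Set.range v) =
      (A ⊓ C) * Submodule.span k (Set.range v) := by
  refine le_antisymm ?_ (le_inf (mul_le_mul_left inf_le_left _) (mul_le_mul_left inf_le_right _))
  rintro u ⟨huA, huC⟩
  obtain ⟨α, hα, hαu⟩ := mem_mul_span_range_iff.1 huA
  obtain ⟨β, hβ, rfl⟩ := mem_mul_span_range_iff.1 huC
  obtain rfl : α = β := hv hαu
  exact mem_mul_span_range_iff.2 ⟨α, fun i => ⟨hα i, hβ i⟩, rfl⟩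

end SpanOfLinearIndependent

section FreeGroupBasis

variable {G ι : Type*} [Group G] (b : FreeGroupBasis ι G)

theorem closure_range_freeGroupBasis : Subgroup.closure (Set.range b) = ⊤ := by
  have hb : Set.range b = b.repr.symm.toMonoidHom '' Set.range FreeGroup.of :=
    Set.range_comp b.repr.symm FreeGroup.of
  rw [hb, ← MonoidHom.map_closure, FreeGroup.closure_range_of, ← MonoidHom.range_eq_map]
  exact MonoidHom.range_eq_top.2 b.repr.symm.surjective

theorem exists_isCocycle₁_of_freeGroupBasis {M : Type*} [AddCommGroup M] [DistribMulAction G M]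
    (c : ι → M) : ∃ d : G → M, IsCocycle₁ d ∧ ∀ i, d (b i) = c i := by
  -- Cocycles `G → M` are the left components of splittings of `M ⋊ G → G`.
  let φ : G →* MulAut (Multiplicative M) :=
    (MulAutMultiplicative M).symm.toMonoidHom.comp (DistribMulAction.toAddAut G M)
  let Φ : G →* Multiplicative M ⋊[φ] G := b.lift fun i => ⟨.ofAdd (c i), b i⟩
  have hΦ (i : ι) : Φ (b i) = ⟨.ofAdd (c i), b i⟩ := by simp [Φ]
  have hright (g : G) : (Φ g).right = g :=
    DFunLike.congr_fun (b.ext_hom (SemidirectProduct.rightHom.comp Φ) (.id G) fun i => by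
      simp [hΦ]) g
  refine ⟨fun g => (Φ g).left.toAdd, fun g h => ?_, fun i => by simp [hΦ]⟩
  change (Φ (g * h)).left.toAdd = _
  rw [map_mul, SemidirectProduct.mul_left, hright, toAdd_mul, add_comm]
  rfl

end FreeGroupBasis

section MonoidAlgebra

variable {k F : Type*} [CommRing k] [Group F]

theorem exists_linearMap_of_isCocycle₁ {M : Type*} [AddCommGroup M] [Module k M]
    [DistribMulAction F M] {N : Subgroup F} {d : N → M} (hd : IsCocycle₁ d) :
    ∃ D : MonoidAlgebra k F →ₗ[k] M,
      ∀ (f : F) (n : N), D (of k F f * (of k F n - 1)) = f • d n := by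
  -- Extend `d` to `F` by `t * n ↦ t • d n`, with `t` in a left transversal of `N`.
  obtain ⟨T, hT, -⟩ := N.exists_isComplement_left 1
  let D : MonoidAlgebra k F →ₗ[k] M :=
    (MonoidAlgebra.basis F k).constr k fun f => ((hT.equiv f).1 : F) • d (hT.equiv f).2
  have hD (f : F) : D (of k F f) = ((hT.equiv f).1 : F) • d (hT.equiv f).2 := by
    simpa using (MonoidAlgebra.basis F k).constr_basis k _ f
  refine ⟨D, fun f n => ?_⟩
  rw [mul_sub, mul_one, ← map_mul, map_sub, hD, hD, hT.equiv_mul_right, hd, smul_add,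
    add_sub_cancel_right, Subgroup.smul_def, smul_smul, hT.equiv_fst_mul_equiv_snd]

theorem linearIndependent_freeGroupBasis_sub_one {N : Subgroup F} {ι : Type*}
    (b : FreeGroupBasis ι N) :
    LinearIndependent (MonoidAlgebra k F) fun i => of k F (b i) - 1 := by
  -- `D` below collects the Fox derivatives with respect to the basis `b`.
  let : DistribMulAction F (ι →₀ MonoidAlgebra k F) := DistribMulAction.compHom _ (of k F)
  obtain ⟨d, hd, hdb⟩ := exists_isCocycle₁_of_freeGroupBasis b
    fun i => Finsupp.single i (1 : MonoidAlgebra k F)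
  obtain ⟨D, hD⟩ := exists_linearMap_of_isCocycle₁ (k := k) hd
  have hDL : D ∘ₗ (Finsupp.linearCombination (MonoidAlgebra k F)
      fun i => of k F (b i) - 1).restrictScalars k = LinearMap.id := by
    refine Finsupp.lhom_ext' fun i => (MonoidAlgebra.basis F k).ext fun f => ?_
    have : f • d (b i) = Finsupp.single i (of k F f) := by
      rw [hdb]
      exact (Finsupp.smul_single _ _ _).trans (by simp)
    simpa [this] using hD f (b i)
  exact Function.LeftInverse.injective fun α => LinearMap.congr_fun hDL α

theorem antipode_antipode (x : MonoidAlgebra k F) :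
    HopfAlgebra.antipode k (HopfAlgebra.antipode k x) = x := by
  have : HopfAlgebra.antipode k ∘ₗ HopfAlgebra.antipode k =
      (LinearMap.id : MonoidAlgebra k F →ₗ[k] MonoidAlgebra k F) :=
    (MonoidAlgebra.basis F k).ext fun f => by simp
  exact LinearMap.congr_fun this x

end MonoidAlgebra

theorem map_antipode_mul {k H : Type*} [CommSemiring k] [Semiring H] [HopfAlgebra k H]
    (A B : Submodule k H) :
    (A * B).map (HopfAlgebra.antipode k) =
      B.map (HopfAlgebra.antipode k) * A.map (HopfAlgebra.antipode k) := by
  simp only [Submodule.mul_eq_span_mul_set, Submodule.map_span, Submodule.map_coe]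
  rw [← Set.image2_mul, ← Set.image2_mul,
    Set.image_image2_antidistrib HopfAlgebra.antipode_mul_antidistrib]

section GroupRing

variable {F : Type} [Group F] {M N : Subgroup F}

theorem of_sub_one_mem_aug {n : F} (hn : n ∈ N) : of ℤ F n - 1 ∈ aug N :=
  Submodule.subset_span ⟨n, hn, rfl⟩

theorem aug_le_iff {P : Submodule ℤ (MonoidAlgebra ℤ F)} :
    aug N ≤ P ↔ ∀ n ∈ N, of ℤ F n - 1 ∈ P := by
  rw [aug, Submodule.span_le]
  exact ⟨fun h n hn => h ⟨n, hn, rfl⟩, by rintro h _ ⟨n, hn, rfl⟩; exact h n hn⟩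

theorem mul_aug_le_iff {A P : Submodule ℤ (MonoidAlgebra ℤ F)} :
    A * aug N ≤ P ↔ ∀ a ∈ A, ∀ n ∈ N, a * (of ℤ F n - 1) ∈ P := by
  refine ⟨fun h a ha n hn => h (Submodule.mul_mem_mul ha (of_sub_one_mem_aug hn)), fun h => ?_⟩
  refine Submodule.mul_le.2 fun a ha x hx => ?_
  exact aug_le_iff (P := P.comap (LinearMap.mulLeft ℤ a)).2 (h a ha) hx

theorem aug_mono (h : M ≤ N) : aug M ≤ aug N :=
  aug_le_iff.2 fun _ hm => of_sub_one_mem_aug (h hm)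

theorem aug_mul_aug_le (h : M ≤ N) : aug N * aug M ≤ aug N := by
  rw [aug, aug, Submodule.span_mul_span, Submodule.span_le]
  rintro _ ⟨_, ⟨n, hn, rfl⟩, _, ⟨m, hm, rfl⟩, rfl⟩
  have hnm : (of ℤ F n - 1) * (of ℤ F m - 1) =
      of ℤ F (n * m) - 1 - (of ℤ F n - 1) - (of ℤ F m - 1) := by
    rw [map_mul]
    noncomm_ring
  change (of ℤ F n - 1) * (of ℤ F m - 1) ∈ aug N
  rw [hnm]
  exact sub_mem (sub_mem (of_sub_one_mem_aug (mul_mem hn (h hm))) (of_sub_one_mem_aug hn))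
    (of_sub_one_mem_aug (h hm))

theorem mul_of_mem {A : Submodule ℤ (MonoidAlgebra ℤ F)} (hA : A * aug N ≤ A)
    {a : MonoidAlgebra ℤ F} (ha : a ∈ A) {n : F} (hn : n ∈ N) : a * of ℤ F n ∈ A := by
  have := add_mem (mul_aug_le_iff.1 hA a ha n hn) ha
  rwa [mul_sub, mul_one, sub_add_cancel] at this

theorem mul_aug_closure {s : Set F} {A : Submodule ℤ (MonoidAlgebra ℤ F)}
    (hA : A * aug (Subgroup.closure s) ≤ A) :
    A * aug (Subgroup.closure s) = A * Submodule.span ℤ ((of ℤ F · - 1) '' s) := by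
  refine le_antisymm (mul_aug_le_iff.2 fun a ha n hn => ?_) (mul_le_mul_right ?_ _)
  · induction hn using Subgroup.closure_induction generalizing a with
    | mem n hn => exact Submodule.mul_mem_mul ha (Submodule.subset_span ⟨n, hn, rfl⟩)
    | one =>
      rw [map_one, sub_self, mul_zero]
      exact zero_mem _
    | mul m n hm _ ihm ihn =>
      have := add_mem (ihn _ (mul_of_mem hA ha hm)) (ihm a ha)
      convert this using 1
      rw [map_mul]
      noncomm_ring
    | inv n hn ihn =>
      have := neg_mem (ihn _ (mul_of_mem hA ha (inv_mem hn)))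
      convert this using 1
      rw [mul_sub _ (of ℤ F n), mul_assoc, ← map_mul, inv_mul_cancel, map_one]
      noncomm_ring
  · rw [Submodule.span_le]
    rintro _ ⟨n, hn, rfl⟩
    exact of_sub_one_mem_aug (Subgroup.subset_closure hn)

theorem mul_aug_inf_mul_aug [IsFreeGroup N] {A B : Submodule ℤ (MonoidAlgebra ℤ F)}
    (hA : A * aug N ≤ A) (hB : B * aug N ≤ B) : A * aug N ⊓ B * aug N = (A ⊓ B) * aug N := by
  let b := IsFreeGroup.basis N
  have hb : Subgroup.closure (Set.range fun i => (b i : F)) = N := by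
    have := congrArg (Subgroup.map N.subtype) (closure_range_freeGroupBasis b)
    rwa [MonoidHom.map_closure, ← Set.range_comp, ← MonoidHom.range_eq_map, N.range_subtype] at this
  have hspan {C : Submodule ℤ (MonoidAlgebra ℤ F)} (hC : C * aug N ≤ C) :
      C * aug N = C * Submodule.span ℤ (Set.range fun i => of ℤ F (b i) - 1) := by
    have := mul_aug_closure (s := Set.range fun i => (b i : F)) (A := C) (by rwa [hb])
    rwa [hb, ← Set.range_comp] at this
  have hAB : (A ⊓ B) * aug N ≤ A ⊓ B :=
    le_inf ((mul_le_mul_left inf_le_left _).trans hA) ((mul_le_mul_left inf_le_right _).trans hB)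
  rw [hspan hA, hspan hB, hspan hAB]
  exact mul_span_range_inf_mul_span_range (linearIndependent_freeGroupBasis_sub_one b)

theorem map_antipode_aug (N : Subgroup F) : (aug N).map (HopfAlgebra.antipode ℤ) = aug N := by
  have hle : (aug N).map (HopfAlgebra.antipode ℤ) ≤ aug N := by
    refine Submodule.map_le_iff_le_comap.2 (aug_le_iff.2 fun n hn => ?_)
    simpa using of_sub_one_mem_aug (inv_mem hn)
  exact hle.antisymm fun x hx => ⟨_, hle ⟨x, hx, rfl⟩, antipode_antipode x⟩

theorem aug_mul_inf_aug_mul [IsFreeGroup N] {A B : Submodule ℤ (MonoidAlgebra ℤ F)}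
    (hA : aug N * A ≤ A) (hB : aug N * B ≤ B) : aug N * A ⊓ aug N * B = aug N * (A ⊓ B) := by
  have hinj : Function.Injective (HopfAlgebra.antipode ℤ (A := MonoidAlgebra ℤ F)) :=
    Function.LeftInverse.injective antipode_antipode
  have hstable {C : Submodule ℤ (MonoidAlgebra ℤ F)} (hC : aug N * C ≤ C) :
      C.map (HopfAlgebra.antipode ℤ) * aug N ≤ C.map (HopfAlgebra.antipode ℤ) := by
    simpa only [map_antipode_mul, map_antipode_aug] using
      Submodule.map_mono (f := HopfAlgebra.antipode ℤ) hC
  apply Submodule.map_injective_of_injective hinj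
  simp only [Submodule.map_inf _ hinj, map_antipode_mul, map_antipode_aug]
  exact mul_aug_inf_mul_aug (hstable hA) (hstable hB)

/-- The homomorphism `n ↦ n - 1` from `N` to the additive group `ℤ[F] ⧸ Δ(N)²`, which shows that
every class of `Δ(N)` modulo `Δ(N)²` is represented by some `n - 1`. -/
noncomputable def subOneModSq (N : Subgroup F) :
    N →* Multiplicative (MonoidAlgebra ℤ F ⧸ aug N ^ 2) where
  toFun n := .ofAdd (Submodule.Quotient.mk (of ℤ F n - 1))
  map_one' := by
    rw [Subgroup.coe_one, map_one, sub_self]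
    rfl
  map_mul' m n := by
    rw [← ofAdd_add, ← Submodule.Quotient.mk_add]
    refine congrArg _ ((Submodule.Quotient.eq _).2 ?_)
    have := Submodule.mul_mem_mul (of_sub_one_mem_aug m.2) (of_sub_one_mem_aug n.2)
    rw [← pow_two] at this
    convert this using 1
    rw [Subgroup.coe_mul, map_mul]
    noncomm_ring

theorem exists_subOneModSq_eq {x : MonoidAlgebra ℤ F} (hx : x ∈ aug N) :
    ∃ n, subOneModSq N n = .ofAdd (Submodule.Quotient.mk x) := by
  let P : AddSubgroup (MonoidAlgebra ℤ F) :=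
    (subOneModSq N).range.toAddSubgroup'.comap (aug N ^ 2).mkQ.toAddMonoidHom
  have : aug N ≤ AddSubgroup.toIntSubmodule P :=
    aug_le_iff.2 fun n hn => ⟨⟨n, hn⟩, rfl⟩
  exact this hx

theorem exists_sub_mem_aug_sq {x : MonoidAlgebra ℤ F} (hx : x ∈ aug N) :
    ∃ n ∈ N, x - (of ℤ F n - 1) ∈ aug N ^ 2 := by
  obtain ⟨n, hn⟩ := exists_subOneModSq_eq hx
  exact ⟨n, n.2, (Submodule.Quotient.eq _).1 (congrArg Multiplicative.toAdd hn).symm⟩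

theorem aug_commutator_le : aug ⁅N, N⁆ ≤ aug N ^ 2 := by
  refine aug_le_iff.2 fun n hn => ?_
  rw [← N.map_subtype_commutator] at hn
  obtain ⟨n, hn, rfl⟩ := hn
  exact (Submodule.Quotient.mk_eq_zero _).1
    (congrArg Multiplicative.toAdd (Abelianization.commutator_subset_ker (subOneModSq N) hn))

theorem mem_commutator_of_sub_one_mem {n : F} (hn : n ∈ N)
    (h : of ℤ F n - 1 ∈ aug (⊤ : Subgroup F) * aug N) : n ∈ ⁅N, N⁆ := by
  let : DistribMulAction F (Additive (Abelianization N)) :=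
    DistribMulAction.compHom _ (1 : F →* ℤ)
  have htriv (f : F) (m : Additive (Abelianization N)) : f • m = m := one_zsmul m
  have hd : IsCocycle₁ fun n : N => Additive.ofMul (Abelianization.of n) := fun m n => by
    change Additive.ofMul (Abelianization.of (m * n)) = _
    rw [Subgroup.smul_def, htriv, map_mul, ofMul_mul, add_comm]
  obtain ⟨D, hD⟩ := exists_linearMap_of_isCocycle₁ (k := ℤ) hd
  have hDn (n : N) : D (of ℤ F n - 1) = Additive.ofMul (Abelianization.of n) := by
    simpa only [map_one, one_mul, htriv] using hD 1 n
  have hker : aug (⊤ : Subgroup F) * aug N ≤ LinearMap.ker D := by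
    rw [aug, aug, Submodule.span_mul_span, Submodule.span_le]
    rintro _ ⟨_, ⟨f, -, rfl⟩, _, ⟨n, hn, rfl⟩, rfl⟩
    change D ((of ℤ F f - 1) * (of ℤ F n - 1)) = 0
    rw [sub_mul, one_mul, map_sub, hD f ⟨n, hn⟩, hDn ⟨n, hn⟩, htriv, sub_self]
  have hab : Abelianization.of (⟨n, hn⟩ : N) = 1 := (hDn ⟨n, hn⟩).symm.trans (hker h)
  rw [← MonoidHom.mem_ker, Abelianization.ker_of] at hab
  rw [← N.map_subtype_commutator]
  exact ⟨⟨n, hn⟩, hab, rfl⟩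

theorem aug_top_mul_aug_inf_aug (h : M ≤ N) :
    aug (⊤ : Subgroup F) * aug N ⊓ aug M = aug M ^ 2 + aug (M ⊓ ⁅N, N⁆) := by
  have hMM : aug M ^ 2 ≤ aug (⊤ : Subgroup F) * aug N := by
    rw [pow_two]
    exact mul_le_mul' (aug_mono le_top) (aug_mono h)
  have hNN : aug N ^ 2 ≤ aug (⊤ : Subgroup F) * aug N := by
    rw [pow_two]
    exact mul_le_mul_left (aug_mono (le_top : N ≤ ⊤)) (aug N)
  refine le_antisymm ?_ (sup_le (le_inf hMM ?_)
    (le_inf (((aug_mono inf_le_right).trans aug_commutator_le).trans hNN) (aug_mono inf_le_left)))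
  · rintro x ⟨hxN, hxM⟩
    obtain ⟨m, hm, hxm⟩ := exists_sub_mem_aug_sq hxM
    have hmN : of ℤ F m - 1 ∈ aug (⊤ : Subgroup F) * aug N := by
      simpa only [sub_sub_cancel] using sub_mem hxN (hMM hxm)
    rw [← sub_add_cancel x (of ℤ F m - 1)]
    exact Submodule.add_mem_sup hxm
      (of_sub_one_mem_aug ⟨hm, mem_commutator_of_sub_one_mem (h hm) hmN⟩)
  · rw [pow_two]
    exact aug_mul_aug_le le_rfl

theorem aug_mul_mul_aug_inf [IsFreeGroup N] {A B : Submodule ℤ (MonoidAlgebra ℤ F)}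
    (hlA : aug N * A ≤ A) (hA : A * aug N ≤ A) (hlB : aug N * B ≤ B) (hB : B * aug N ≤ B) :
    aug N * A * aug N ⊓ aug N * B * aug N = aug N * (A ⊓ B) * aug N := by
  have hstable {C : Submodule ℤ (MonoidAlgebra ℤ F)} (hC : C * aug N ≤ C) :
      aug N * C * aug N ≤ aug N * C := by
    rw [mul_assoc]
    exact mul_le_mul_right hC _
  rw [mul_aug_inf_mul_aug (hstable hA) (hstable hB), aug_mul_inf_aug_mul hlA hlB]

theorem intersection_lemma'_general (R S : Subgroup F) [IsFreeGroup R] (hRS : R ≤ S) :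
    (aug R * aug (⊤ : Subgroup F) * aug S * aug R) ⊓ (aug R ^ 3) =
      aug R ^ 4 + aug R * aug (R ⊓ ⁅S, S⁆) * aug R := by
  have hleft : aug R * (aug (⊤ : Subgroup F) * aug S) ≤ aug (⊤ : Subgroup F) * aug S := by
    rw [← mul_assoc]
    have htop : aug R * aug (⊤ : Subgroup F) ≤ aug (⊤ : Subgroup F) :=
      (mul_le_mul_left (aug_mono (le_top : R ≤ ⊤)) _).trans (aug_mul_aug_le le_rfl)
    exact mul_le_mul_left htop (aug S)
  have hright : aug (⊤ : Subgroup F) * aug S * aug R ≤ aug (⊤ : Subgroup F) * aug S := by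
    rw [mul_assoc]
    exact mul_le_mul_right (aug_mul_aug_le hRS) _
  have hR : aug R * aug R ≤ aug R := aug_mul_aug_le le_rfl
  calc aug R * aug (⊤ : Subgroup F) * aug S * aug R ⊓ aug R ^ 3
    _ = aug R * (aug (⊤ : Subgroup F) * aug S) * aug R ⊓ aug R * aug R * aug R := by
      rw [mul_assoc (aug R), pow_three']
    _ = aug R * (aug (⊤ : Subgroup F) * aug S ⊓ aug R) * aug R :=
      aug_mul_mul_aug_inf hleft hright hR hR
    _ = aug R * (aug R ^ 2 + aug (R ⊓ ⁅S, S⁆)) * aug R := by rw [aug_top_mul_aug_inf_aug hRS]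
    _ = aug R ^ 4 + aug R * aug (R ⊓ ⁅S, S⁆) * aug R := by
      rw [mul_add, add_mul, ← pow_succ', ← pow_succ]

end GroupRing

/-- Lemma 2.3: for normal subgroups `R ⊆ S` of a free group `F`,
`Δ(R)Δ(F)Δ(S)Δ(R) ∩ Δ(R)³ = Δ(R)⁴ + Δ(R)Δ(R ∩ S')Δ(R)`. -/
theorem intersection_lemma' (F : Type) [Group F] [IsFreeGroup F]
    (R S : Subgroup F) [R.Normal] [S.Normal] (hRS : R ≤ S) :
    (aug R * aug (⊤ : Subgroup F) * aug S * aug R) ⊓ (aug R ^ 3) =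
      aug R ^ 4 + aug R * aug (R ⊓ ⁅S, S⁆) * aug R :=
  intersection_lemma'_general R S hRS
end

section
/- Let F be a free group and R, S, T normal subgroups of F with R ⊆ S and R ⊆ T, and let 𝐫, 𝐬, 𝐭 be the two-sided ideals of ℤ[F] generated by the augmentation ideals of R, S, T. If a ∈ D(F, 𝐬𝐫𝐭 + 𝐭𝐫𝐬), then a² ∈ D(F, 𝐫𝐫𝐬 + 𝐬𝐫𝐫 + 𝐭𝐫𝐫 + 𝐫𝐫𝐭). -/
/-!
Integration along the edges of the Cayley tree of a free group `F` is possible without any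
cocycle condition. For a normal subgroup `R`, the form `(z, w) ↦ z* w` on `𝐫`, with `*` the
antipode, taken modulo `𝐟𝐫𝐫 + 𝐫𝐫𝐟`, only depends on the classes modulo `𝐫𝐟`. Evaluated at the
elements `s(b, a) - a`, where `s(b, a) ∈ aR` is chosen equivariantly, it gives by integration a
bilinear form `B` on `𝐟` which is invariant under `F` and, in each variable, under `R`. A second
integration gives a linear `Φ` with `Φ(x y) = B(x*, y)` on `𝐟𝐟`. Invariance under `R` makes `Φ`
vanish on `𝐟𝐫𝐟`, while a direct computation gives `Φ(x) = x* - x` on `Δ(R)²`. Any `a ∈ F` with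
`a - 1 ∈ 𝐟𝐫𝐟` has `a - 1 ∈ Δ(R)²`, so `a⁻¹ ≡ a` and `a² ≡ 1` modulo `𝐟𝐫𝐫 + 𝐫𝐫𝐟`. The theorem is
this statement for the free group `ST`.
-/

namespace Stohr

open MonoidAlgebra HopfAlgebra

section CayleyTree

variable {F : Type*} [Group F] [IsFreeGroup F]

theorem apply_eq_apply_one_of_edge {α : Type*} {h : F → α}
    (hh : ∀ k x, h (k * IsFreeGroup.of x) = h k) (g : F) : h g = h 1 := by
  suffices ∀ w k, h (k * IsFreeGroup.mulEquiv F w) = h k by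
    simpa using this ((IsFreeGroup.mulEquiv F).symm g) 1
  have hof (x) (k : F) : h (k * IsFreeGroup.mulEquiv F (.of x)) = h k := hh k x
  intro w
  induction w using FreeGroup.induction_on with
  | C1 => simp
  | of x => exact hof x
  | inv_of x _ => intro k; rw [← hof x]; simp
  | mul v w hv hw => intro k; rw [map_mul, ← mul_assoc, hw, hv]

variable {A : Type*} [AddCommGroup A]

-- The generator `x` acts on `F × A` by `(k, c) ↦ (k x, c + φ k x)`; follow the orbit of `(1, 0)`.
theorem exists_primitive (φ : F → IsFreeGroup.Generators F → A) :
    ∃ h : F → A, ∀ k x, h (k * IsFreeGroup.of x) = h k + φ k x := by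
  let step (x : IsFreeGroup.Generators F) : Equiv.Perm (F × A) :=
    { toFun p := (p.1 * IsFreeGroup.of x, p.2 + φ p.1 x)
      invFun p := (p.1 * (IsFreeGroup.of x)⁻¹, p.2 - φ (p.1 * (IsFreeGroup.of x)⁻¹) x)
      left_inv p := by simp
      right_inv p := by simp }
  let path : F →* (Equiv.Perm (F × A))ᵐᵒᵖ := IsFreeGroup.lift fun x ↦ .op (step x)
  let endpoint (g : F) : F × A := (path g).unop (1, 0)
  have endpoint_mul (k x) : endpoint (k * IsFreeGroup.of x) = step x (endpoint k) := by
    simp [endpoint, path]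
  have endpoint_fst (g : F) : (endpoint g).1 = g := by
    have := apply_eq_apply_one_of_edge (h := fun g ↦ (endpoint g).1 * g⁻¹)
      (fun k x ↦ by simp [endpoint_mul, step]) g
    simpa [endpoint, mul_inv_eq_one] using this
  exact ⟨fun g ↦ (endpoint g).2, fun k x ↦ by simp [endpoint_mul, step, endpoint_fst]⟩

end CayleyTree

section Ideals

variable {F : Type} [Group F] {M N : Subgroup F}

theorem top_mul_top : (⊤ : Submodule ℤ ℤ[F]) * ⊤ = ⊤ := by
  rw [← Algebra.top_toSubmodule, (Subalgebra.isIdempotentElem_toSubmodule ⊤).eq]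

theorem span_range_of : Submodule.span ℤ (Set.range (of ℤ F)) = ⊤ := by
  rw [← (MonoidAlgebra.basis F ℤ).span_eq]
  congr 2

theorem of_sub_one_mem_aug {n : F} (hn : n ∈ N) : of ℤ F n - 1 ∈ aug N :=
  Submodule.subset_span ⟨n, hn, rfl⟩

theorem aug_le {P : Submodule ℤ ℤ[F]} (h : ∀ n ∈ N, of ℤ F n - 1 ∈ P) : aug N ≤ P := by
  refine Submodule.span_le.2 ?_
  rintro _ ⟨n, hn, rfl⟩
  exact h n hn

theorem eqOn_aug {A : Type*} [AddCommGroup A] {L L' : ℤ[F] →ₗ[ℤ] A}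
    (h : ∀ n ∈ N, L (of ℤ F n - 1) = L' (of ℤ F n - 1)) {x : ℤ[F]} (hx : x ∈ aug N) :
    L x = L' x :=
  aug_le (P := LinearMap.eqLocus L L') h hx

theorem aug_le_augI (N : Subgroup F) : aug N ≤ augI N := fun x hx ↦ by
  simpa [augI] using Submodule.mul_mem_mul hx (Submodule.mem_top (x := 1))

theorem of_sub_one_mem_augI {n : F} (hn : n ∈ N) : of ℤ F n - 1 ∈ augI N :=
  aug_le_augI N (of_sub_one_mem_aug hn)

theorem augI_mono (h : M ≤ N) : augI M ≤ augI N :=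
  mul_le_mul_left (aug_le fun _ hn ↦ of_sub_one_mem_aug (h hn)) _

theorem augI_mul_top (N : Subgroup F) : augI N * ⊤ = augI N := by
  rw [augI, mul_assoc, top_mul_top]

theorem of_mul_of_sub_one (g n : F) :
    of ℤ F g * (of ℤ F n - 1) = (of ℤ F (g * n * g⁻¹) - 1) * of ℤ F g := by
  simp only [mul_sub, sub_mul, ← map_mul, mul_one, one_mul, inv_mul_cancel_right]

theorem top_mul_aug (N : Subgroup F) [hN : N.Normal] : ⊤ * aug N = augI N := by
  apply le_antisymm
  · rw [← span_range_of, aug, Submodule.span_mul_span, Submodule.span_le]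
    rintro _ ⟨_, ⟨g, rfl⟩, _, ⟨n, hn, rfl⟩, rfl⟩
    simp only [of_mul_of_sub_one]
    exact Submodule.mul_mem_mul (of_sub_one_mem_aug (hN.conj_mem n hn g)) Submodule.mem_top
  · rw [augI, ← span_range_of, aug, Submodule.span_mul_span, Submodule.span_le]
    rintro _ ⟨_, ⟨n, hn, rfl⟩, _, ⟨g, rfl⟩, rfl⟩
    have h := of_mul_of_sub_one g (g⁻¹ * n * g)
    rw [mul_assoc g⁻¹, mul_inv_cancel_left, mul_inv_cancel_right] at h
    simp only [← h]
    exact Submodule.mul_mem_mul (Submodule.subset_span ⟨g, rfl⟩)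
      (of_sub_one_mem_aug (by simpa [mul_assoc] using hN.conj_mem n hn g⁻¹))

theorem top_mul_augI (N : Subgroup F) [N.Normal] : ⊤ * augI N = augI N := by
  rw [← top_mul_aug, ← mul_assoc, top_mul_top]

theorem mul_mem_augI_left [N.Normal] (z : ℤ[F]) {x : ℤ[F]} (hx : x ∈ augI N) :
    z * x ∈ augI N :=
  top_mul_augI N ▸ Submodule.mul_mem_mul Submodule.mem_top hx

theorem mul_mem_augI_right {x : ℤ[F]} (hx : x ∈ augI N) (z : ℤ[F]) :
    x * z ∈ augI N :=
  augI_mul_top N ▸ Submodule.mul_mem_mul hx Submodule.mem_top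

theorem mul_augI_le (P : Submodule ℤ ℤ[F]) (N : Subgroup F) [N.Normal] :
    P * augI N ≤ augI N :=
  (mul_le_mul_left le_top _).trans (top_mul_augI N).le

theorem augI_mul_le (N : Subgroup F) (P : Submodule ℤ ℤ[F]) : augI N * P ≤ augI N :=
  (mul_le_mul_right le_top _).trans (augI_mul_top N).le

theorem of_sub_of_mem_augI [N.Normal] {g h : F} (hgh : (g : F ⧸ N) = h) :
    of ℤ F h - of ℤ F g ∈ augI N := by
  have : of ℤ F h - of ℤ F g = of ℤ F g * (of ℤ F (g⁻¹ * h) - 1) := by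
    rw [mul_sub, ← map_mul, mul_inv_cancel_left, mul_one]
  exact this ▸ mul_mem_augI_left _ (of_sub_one_mem_augI (QuotientGroup.eq.1 hgh))

theorem augI_top : augI (⊤ : Subgroup F) = aug ⊤ := by
  refine le_antisymm ?_ (aug_le_augI ⊤)
  rw [augI, ← span_range_of, aug, Submodule.span_mul_span, Submodule.span_le]
  rintro _ ⟨_, ⟨n, -, rfl⟩, _, ⟨g, rfl⟩, rfl⟩
  have : (of ℤ F n - 1) * of ℤ F g = (of ℤ F (n * g) - 1) - (of ℤ F g - 1) := by
    rw [sub_mul, ← map_mul, one_mul, sub_sub_sub_cancel_right]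
  simp only [this]
  exact sub_mem (of_sub_one_mem_aug trivial) (of_sub_one_mem_aug trivial)

theorem mem_of_of_sub_one_mem_augI [N.Normal] {a : F} (ha : of ℤ F a - 1 ∈ augI N) : a ∈ N := by
  let π : ℤ[F] →ₐ[ℤ] ℤ[F ⧸ N] := mapDomainAlgHom ℤ ℤ (QuotientGroup.mk' N)
  have hπ (g : F) : π (of ℤ F g) = of ℤ (F ⧸ N) g := by simp [π]
  have hker : augI N ≤ LinearMap.ker π.toLinearMap := by
    refine Submodule.mul_le.2 fun x hx y _ ↦ ?_
    suffices π.toLinearMap x = 0 by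
      rw [LinearMap.mem_ker, AlgHom.toLinearMap_apply, map_mul, ← AlgHom.toLinearMap_apply, this,
        zero_mul]
    refine eqOn_aug (L' := 0) (fun n hn ↦ ?_) hx
    rw [AlgHom.toLinearMap_apply, map_sub, hπ, (QuotientGroup.eq_one_iff n).2 hn, map_one, map_one,
      sub_self, LinearMap.zero_apply]
  have : of ℤ (F ⧸ N) a = of ℤ (F ⧸ N) 1 := by
    simpa [hπ, sub_eq_zero, -of_apply] using hker ha
  exact (QuotientGroup.eq_one_iff a).1 (of_injective this)

theorem augI_sup_le (S T : Subgroup F) [T.Normal] : augI (S ⊔ T) ≤ augI S + augI T := by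
  suffices aug (S ⊔ T) ≤ augI S + augI T by
    refine (mul_le_mul_left this _).trans ?_
    rw [add_mul, augI_mul_top, augI_mul_top]
  refine aug_le fun _ hst ↦ ?_
  obtain ⟨s, hs, t, ht, rfl⟩ := Subgroup.mem_sup_of_normal_right.1 hst
  have : of ℤ F (s * t) - 1 = (of ℤ F s - 1) * of ℤ F t + (of ℤ F t - 1) := by
    rw [map_mul]; noncomm_ring
  exact this ▸ Submodule.add_mem_sup (mul_mem_augI_right (of_sub_one_mem_augI hs) _)
    (of_sub_one_mem_augI ht)

theorem antipode_of (g : F) : antipode ℤ (of ℤ F g) = of ℤ F g⁻¹ := by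
  simp [antipode_single]

theorem antipode_of_sub_one (g : F) : antipode ℤ (of ℤ F g - 1) = of ℤ F g⁻¹ - 1 := by
  rw [map_sub, antipode_of, antipode_one]

theorem map_antipode_mul (P Q : Submodule ℤ ℤ[F]) :
    (P * Q).map (antipode ℤ) ≤ Q.map (antipode ℤ) * P.map (antipode ℤ) :=
  Submodule.map_le_iff_le_comap.2 <| Submodule.mul_le.2 fun x hx y hy ↦ by
    rw [Submodule.mem_comap, antipode_mul_antidistrib]
    exact Submodule.mul_mem_mul (Submodule.mem_map_of_mem hy) (Submodule.mem_map_of_mem hx)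

theorem antipode_mem_augI [N.Normal] {x : ℤ[F]} (hx : x ∈ augI N) :
    antipode ℤ x ∈ augI N := by
  have haug : (aug N).map (antipode ℤ) ≤ augI N :=
    Submodule.map_le_iff_le_comap.2 <| aug_le fun n hn ↦ by
      rw [Submodule.mem_comap, antipode_of_sub_one]
      exact of_sub_one_mem_augI (N.inv_mem hn)
  have := map_antipode_mul _ _ (Submodule.mem_map_of_mem hx)
  exact (mul_le_mul' le_top haug).trans (top_mul_augI N).le this

end Ideals

section Integration

variable {F : Type} [Group F] {A : Type*} [AddCommGroup A]

theorem exists_linearMap_of (φ : F → A) : ∃ L : ℤ[F] →ₗ[ℤ] A, ∀ g, L (of ℤ F g) = φ g :=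
  ⟨(MonoidAlgebra.basis F ℤ).constr ℤ φ, (MonoidAlgebra.basis F ℤ).constr_basis ℤ φ⟩

theorem apply_eq_of_forall_of {L L' : ℤ[F] →ₗ[ℤ] A} (h : ∀ g, L (of ℤ F g) = L' (of ℤ F g))
    (z : ℤ[F]) : L z = L' z :=
  LinearMap.congr_fun ((MonoidAlgebra.basis F ℤ).ext h) z

variable [IsFreeGroup F]

/-- The edge `k → k x` of the Cayley tree of the free group `F`, as an element of `ℤ[F]`. -/
noncomputable def edge (k : F) (x : IsFreeGroup.Generators F) : ℤ[F] :=
  of ℤ F (k * IsFreeGroup.of x) - of ℤ F k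

theorem of_mul_edge (g k : F) (x : IsFreeGroup.Generators F) :
    of ℤ F g * edge k x = edge (g * k) x := by
  simp only [edge, mul_sub, ← map_mul, mul_assoc]

theorem apply_of_sub_one_of_edge {L : ℤ[F] →ₗ[ℤ] A} {h : F → A}
    (hL : ∀ k x, L (edge k x) = h (k * IsFreeGroup.of x) - h k) (g : F) :
    L (of ℤ F g - 1) = h g - h 1 := by
  have := apply_eq_apply_one_of_edge (h := fun g ↦ L (of ℤ F g) - h g) (fun k x ↦ by
    rw [sub_eq_sub_iff_sub_eq_sub, ← map_sub]
    exact hL k x) g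
  rwa [sub_eq_sub_iff_sub_eq_sub, ← map_sub, map_one] at this

theorem eqOn_augI_top_of_edge {L L' : ℤ[F] →ₗ[ℤ] A} (h : ∀ k x, L (edge k x) = L' (edge k x))
    {x : ℤ[F]} (hx : x ∈ augI (⊤ : Subgroup F)) : L x = L' x := by
  rw [augI_top] at hx
  refine eqOn_aug (fun g _ ↦ ?_) hx
  rw [apply_of_sub_one_of_edge (h := fun g ↦ L' (of ℤ F g)) fun k x ↦ by
    rw [h, edge, map_sub], map_sub, map_one]

theorem eqOn_augI_top_of_edge₂ {B B' : ℤ[F] →ₗ[ℤ] ℤ[F] →ₗ[ℤ] A}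
    (h : ∀ k x l y, B (edge k x) (edge l y) = B' (edge k x) (edge l y)) {x y : ℤ[F]}
    (hx : x ∈ augI (⊤ : Subgroup F)) (hy : y ∈ augI (⊤ : Subgroup F)) : B x y = B' x y :=
  eqOn_augI_top_of_edge (L := B.flip y) (L' := B'.flip y)
    (fun k x ↦ eqOn_augI_top_of_edge (h k x) hy) hx

theorem exists_linear_primitive (φ : F → IsFreeGroup.Generators F → A) :
    ∃ L : ℤ[F] →ₗ[ℤ] A, ∀ k x, L (edge k x) = φ k x := by
  obtain ⟨h, hh⟩ := exists_primitive φ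
  obtain ⟨L, hL⟩ := exists_linearMap_of h
  exact ⟨L, fun k x ↦ by rw [edge, map_sub, hL, hL, hh, add_sub_cancel_left]⟩

theorem exists_bilinear_primitive (φ : F → F → IsFreeGroup.Generators F → A) :
    ∃ E : ℤ[F] →ₗ[ℤ] ℤ[F] →ₗ[ℤ] A, ∀ g k x, E (of ℤ F g) (edge k x) = φ g k x := by
  choose L hL using fun g ↦ exists_linear_primitive (φ g)
  obtain ⟨E, hE⟩ := exists_linearMap_of L
  exact ⟨E, fun g k x ↦ by rw [hE, hL]⟩

end Integration

section Pairing

variable {F : Type} [Group F]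

/-- The ideal `𝐮𝐫𝐫 + 𝐫𝐫𝐮` of `ℤ[F]`; the conclusion of the theorem is congruence modulo it. -/
noncomputable def targetIdeal (U R : Subgroup F) : Submodule ℤ ℤ[F] :=
  augI U * augI R * augI R + augI R * augI R * augI U

variable (R : Subgroup F)

/-- The form `(z, w) ↦ z* w` modulo `𝐟𝐫𝐫 + 𝐫𝐫𝐟`, where `*` is the antipode `g ↦ g⁻¹`. -/
noncomputable def pairing : ℤ[F] →ₗ[ℤ] ℤ[F] →ₗ[ℤ] ℤ[F] ⧸ targetIdeal ⊤ R :=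
  (LinearMap.mul ℤ ℤ[F] ∘ₗ antipode ℤ).compr₂ (targetIdeal ⊤ R).mkQ

theorem pairing_apply (z w : ℤ[F]) :
    pairing R z w = (targetIdeal ⊤ R).mkQ (antipode ℤ z * w) := rfl

theorem pairing_of_mul_of_mul (g : F) (z w : ℤ[F]) :
    pairing R (of ℤ F g * z) (of ℤ F g * w) = pairing R z w := by
  rw [pairing_apply, antipode_mul_antidistrib, antipode_of, mul_assoc, ← mul_assoc (of ℤ F g⁻¹),
    ← map_mul, inv_mul_cancel, map_one, one_mul, pairing_apply]

variable {R}

theorem of_sub_one_mul_of_sub_of_mem {u : F} (hu : u ∈ R) (g h : F) :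
    (of ℤ F u - 1) * (of ℤ F g - of ℤ F h) ∈ augI R * augI ⊤ :=
  Submodule.mul_mem_mul (of_sub_one_mem_augI hu) <|
    of_sub_of_mem_augI ((QuotientGroup.eq (s := ⊤)).2 trivial)

variable [R.Normal]

theorem pairing_eq_zero_left {z w : ℤ[F]} (hz : z ∈ augI R * augI ⊤) (hw : w ∈ augI R) :
    pairing R z w = 0 := by
  have : antipode ℤ z ∈ augI ⊤ * augI R :=
    mul_le_mul' (Submodule.map_le_iff_le_comap.2 fun _ ↦ antipode_mem_augI)
      (Submodule.map_le_iff_le_comap.2 fun _ ↦ antipode_mem_augI)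
      (map_antipode_mul _ _ (Submodule.mem_map_of_mem hz))
  exact (Submodule.Quotient.mk_eq_zero _).2 <|
    Submodule.mem_sup_left (Submodule.mul_mem_mul this hw)

theorem pairing_eq_zero_right {z w : ℤ[F]} (hz : z ∈ augI R) (hw : w ∈ augI R * augI ⊤) :
    pairing R z w = 0 := by
  have : antipode ℤ z * w ∈ augI R * augI R * augI ⊤ := by
    rw [mul_assoc]
    exact Submodule.mul_mem_mul (antipode_mem_augI hz) hw
  exact (Submodule.Quotient.mk_eq_zero _).2 (Submodule.mem_sup_right this)

theorem pairing_congr {z z' w w' : ℤ[F]} (hz : z ∈ augI R) (hw' : w' ∈ augI R)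
    (hzz' : z' - z ∈ augI R * augI ⊤) (hww' : w' - w ∈ augI R * augI ⊤) :
    pairing R z' w' = pairing R z w := by
  have hleft := pairing_eq_zero_left hzz' hw'
  have hright := pairing_eq_zero_right hz hww'
  rw [map_sub, LinearMap.sub_apply, sub_eq_zero] at hleft
  rwa [map_sub, sub_eq_zero, ← hleft] at hright

end Pairing

section Defect

variable {F : Type} [Group F] (R : Subgroup F)

/-- The vertex `a s(a⁻¹b)` of the coset `bR`, reached from `a` along the chosen representative
`s(a⁻¹b)` of `a⁻¹bR`. -/
noncomputable def transport (a b : F) : F :=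
  a * ((a⁻¹ * b : F) : F ⧸ R).out

/-- The deviation from `a` of the vertex of `aR` reached from `b` by `transport`. -/
noncomputable def defect (a b : F) : ℤ[F] :=
  of ℤ F (transport R b a) - of ℤ F a

theorem transport_mul_mul (g a b : F) : transport R (g * a) (g * b) = g * transport R a b := by
  simp only [transport, mul_inv_rev, mul_assoc, inv_mul_cancel_left]

theorem defect_mul_mul (g a b : F) : defect R (g * a) (g * b) = of ℤ F g * defect R a b := by
  simp only [defect, transport_mul_mul, mul_sub, map_mul]

variable [R.Normal]

theorem defect_mem_augI (a b : F) : defect R a b ∈ augI R := by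
  refine of_sub_of_mem_augI ?_
  simp [transport]

variable {R} {u : F} (hu : u ∈ R)

include hu

theorem transport_mul_left (a b : F) : transport R (u * a) b = u * transport R a b := by
  have : ((u : F) : F ⧸ R) = 1 := (QuotientGroup.eq_one_iff u).2 hu
  simp [transport, this, mul_assoc]

theorem transport_mul_right (a b : F) : transport R a (u * b) = transport R a b := by
  have : ((u : F) : F ⧸ R) = 1 := (QuotientGroup.eq_one_iff u).2 hu
  simp [transport, this]

theorem defect_mul_left (a b : F) :
    defect R (u * a) b = defect R a b - (of ℤ F u - 1) * of ℤ F a := by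
  rw [defect, defect, transport_mul_right hu, map_mul]
  noncomm_ring

theorem defect_mul_right (a b : F) :
    defect R a (u * b) = defect R a b + (of ℤ F u - 1) * of ℤ F (transport R b a) := by
  rw [defect, defect, transport_mul_left hu, map_mul]
  noncomm_ring

theorem defect_left_of_mem (b : F) : defect R u b = defect R 1 b - (of ℤ F u - 1) := by
  have := defect_mul_left hu 1 b
  rwa [mul_one, map_one, mul_one] at this

theorem defect_right_of_mem (a : F) :
    defect R a u = defect R a 1 + (of ℤ F u - 1) * of ℤ F (transport R 1 a) := by
  have := defect_mul_right hu a 1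
  rwa [mul_one] at this

end Defect

section EdgePairing

variable {F : Type} [Group F] (R : Subgroup F)

/-- The increment along an edge `b → b'` of the first potential with base point `a`. -/
noncomputable def fstIncrement (a b b' : F) : ℤ[F] ⧸ targetIdeal ⊤ R :=
  pairing R (defect R a b) (defect R b a - defect R b' a)

/-- The increment along an edge `a → a'` of the second potential with base point `b`. -/
noncomputable def sndIncrement (a a' b : F) : ℤ[F] ⧸ targetIdeal ⊤ R :=
  pairing R (defect R b a') (defect R b a' - defect R b a)

/-- The value of the invariant form on the pair of edges `a → a'`, `b → b'`. -/
noncomputable def edgePairing (a a' b b' : F) : ℤ[F] ⧸ targetIdeal ⊤ R :=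
  fstIncrement R a' b b' - fstIncrement R a b b' -
    (sndIncrement R a a' b' - sndIncrement R a a' b)

theorem edgePairing_mul (g a a' b b' : F) :
    edgePairing R (g * a) (g * a') (g * b) (g * b') = edgePairing R a a' b b' := by
  simp only [edgePairing, fstIncrement, sndIncrement, defect_mul_mul, ← mul_sub,
    pairing_of_mul_of_mul]

-- In this grouping, each argument moves within its class modulo `𝐫𝐟` when `a, a'` move in `F ⧸ R`.
theorem edgePairing_eq (a a' b b' : F) :
    edgePairing R a a' b b' =
      pairing R (defect R a' b + defect R b a') (defect R b a' - defect R b a) -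
        pairing R (defect R a b - defect R a' b) (defect R b a - defect R b' a) -
        pairing R (defect R a' b + defect R b' a') (defect R b' a' - defect R b' a) := by
  simp only [edgePairing, fstIncrement, sndIncrement, map_add, map_sub, LinearMap.add_apply,
    LinearMap.sub_apply]
  abel

variable {R} [R.Normal] {u : F} (hu : u ∈ R)

include hu

theorem edgePairing_mul_left_of_mem (a a' b b' : F) :
    edgePairing R (u * a) (u * a') b b' = edgePairing R a a' b b' := by
  have hd := defect_mem_augI R
  have hsum (c b b' : F) : defect R (u * c) b + defect R b' (u * c) -
      (defect R c b + defect R b' c) ∈ augI R * augI ⊤ := by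
    convert of_sub_one_mul_of_sub_of_mem hu (transport R c b') c using 1
    rw [defect_mul_left hu, defect_mul_right hu]
    noncomm_ring
  have hfst : defect R (u * a) b - defect R (u * a') b - (defect R a b - defect R a' b) ∈
      augI R * augI ⊤ := by
    convert of_sub_one_mul_of_sub_of_mem hu a' a using 1
    rw [defect_mul_left hu, defect_mul_left hu]
    noncomm_ring
  have hsnd (c c' b b' : F) : defect R b (u * c) - defect R b' (u * c') -
      (defect R b c - defect R b' c') ∈ augI R * augI ⊤ := by
    convert of_sub_one_mul_of_sub_of_mem hu (transport R c b) (transport R c' b') using 1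
    rw [defect_mul_right hu, defect_mul_right hu]
    noncomm_ring
  rw [edgePairing_eq, edgePairing_eq,
    pairing_congr (add_mem (hd _ _) (hd _ _)) (sub_mem (hd _ _) (hd _ _)) (hsum a' b b)
      (hsnd a' a b b),
    pairing_congr (sub_mem (hd _ _) (hd _ _)) (sub_mem (hd _ _) (hd _ _)) hfst (hsnd a a b b'),
    pairing_congr (add_mem (hd _ _) (hd _ _)) (sub_mem (hd _ _) (hd _ _)) (hsum a' b b')
      (hsnd a' a b' b')]

end EdgePairing

section InvariantForm

variable {F : Type} [Group F] {R : Subgroup F} [R.Normal]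

theorem fstIncrement_sub_of_mem {u : F} (hu : u ∈ R) (b b' : F) :
    fstIncrement R u b b' - fstIncrement R 1 b b' =
      pairing R (of ℤ F u - 1) (defect R b' 1) - pairing R (of ℤ F u - 1) (defect R b 1) := by
  have hd := defect_mem_augI R
  have hright : defect R b u - defect R b' u - (defect R b 1 - defect R b' 1) ∈
      augI R * augI ⊤ := by
    convert of_sub_one_mul_of_sub_of_mem hu (transport R 1 b) (transport R 1 b') using 1
    rw [defect_right_of_mem hu, defect_right_of_mem hu]
    noncomm_ring
  rw [fstIncrement, pairing_congr (hd u b) (sub_mem (hd _ _) (hd _ _)) (by simp) hright,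
    defect_left_of_mem hu, fstIncrement]
  simp only [map_sub, LinearMap.sub_apply]
  abel

theorem sndIncrement_sub_of_mem {v : F} (hv : v ∈ R) (a a' : F) :
    sndIncrement R a a' v - sndIncrement R a a' 1 =
      -pairing R (of ℤ F v - 1) (defect R 1 a') - -pairing R (of ℤ F v - 1) (defect R 1 a) := by
  simp only [sndIncrement, defect_left_of_mem hv, sub_sub_sub_cancel_right, map_sub,
    LinearMap.sub_apply]
  abel

variable [IsFreeGroup F]

variable {E₁ E₂ : ℤ[F] →ₗ[ℤ] ℤ[F] →ₗ[ℤ] ℤ[F] ⧸ targetIdeal ⊤ R}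

theorem potential_of_sub_one_of_mem
    (h₁ : ∀ a k x, E₁ (of ℤ F a) (edge k x) = fstIncrement R a k (k * IsFreeGroup.of x))
    (h₂ : ∀ b k x, E₂ (of ℤ F b) (edge k x) = sndIncrement R k (k * IsFreeGroup.of x) b)
    {u v : F} (hu : u ∈ R) (hv : v ∈ R) :
    E₁ (of ℤ F u - 1) (of ℤ F v - 1) - E₂ (of ℤ F v - 1) (of ℤ F u - 1) =
      pairing R (of ℤ F v - 1) (of ℤ F u - 1) - pairing R (of ℤ F u - 1) (of ℤ F v - 1) := by
  have hE₁ : E₁ (of ℤ F u - 1) (of ℤ F v - 1) = -pairing R (of ℤ F u - 1) (of ℤ F v - 1) := by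
    have hdefect : defect R v 1 - defect R 1 1 = -(of ℤ F v - 1) := by
      rw [defect_left_of_mem hv]
      abel
    rw [apply_of_sub_one_of_edge (h := fun g ↦ pairing R (of ℤ F u - 1) (defect R g 1))
      (fun k x ↦ by
        rw [← map_one (of ℤ F), map_sub, LinearMap.sub_apply, h₁, h₁, map_one,
          fstIncrement_sub_of_mem hu]),
      ← map_sub, hdefect, map_neg]
  have hE₂ : E₂ (of ℤ F v - 1) (of ℤ F u - 1) = -pairing R (of ℤ F v - 1) (of ℤ F u - 1) := by
    have hdefect : defect R 1 u - defect R 1 1 - (of ℤ F u - 1) ∈ augI R * augI ⊤ := by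
      convert of_sub_one_mul_of_sub_of_mem hu (transport R 1 1) 1 using 1
      rw [defect_right_of_mem hu, map_one]
      noncomm_ring
    rw [apply_of_sub_one_of_edge (h := fun g ↦ -pairing R (of ℤ F v - 1) (defect R 1 g))
      (fun k x ↦ by
        rw [← map_one (of ℤ F), map_sub, LinearMap.sub_apply, h₂, h₂, map_one,
          sndIncrement_sub_of_mem hv]),
      ← neg_sub', ← map_sub, pairing_congr (of_sub_one_mem_augI hv)
        (sub_mem (defect_mem_augI R _ _) (defect_mem_augI R _ _)) (by simp) hdefect]
  rw [hE₁, hE₂]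
  abel

variable (R) in
theorem exists_form_edge_eq_edgePairing :
    ∃ B : ℤ[F] →ₗ[ℤ] ℤ[F] →ₗ[ℤ] ℤ[F] ⧸ targetIdeal ⊤ R,
      (∀ k x l y, B (edge k x) (edge l y) =
        edgePairing R k (k * IsFreeGroup.of x) l (l * IsFreeGroup.of y)) ∧
      ∀ u ∈ R, ∀ v ∈ R, B (of ℤ F u - 1) (of ℤ F v - 1) =
        pairing R (of ℤ F v - 1) (of ℤ F u - 1) - pairing R (of ℤ F u - 1) (of ℤ F v - 1) := by
  obtain ⟨E₁, h₁⟩ := exists_bilinear_primitive fun (a k : F) x ↦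
    fstIncrement R a k (k * IsFreeGroup.of x)
  obtain ⟨E₂, h₂⟩ := exists_bilinear_primitive fun (b k : F) x ↦
    sndIncrement R k (k * IsFreeGroup.of x) b
  refine ⟨E₁ - E₂.flip, fun k x l y ↦ ?_, fun u hu v hv ↦
    potential_of_sub_one_of_mem h₁ h₂ hu hv⟩
  have hE₁ : E₁ (edge k x) (edge l y) = fstIncrement R (k * IsFreeGroup.of x) l
      (l * IsFreeGroup.of y) - fstIncrement R k l (l * IsFreeGroup.of y) := by
    rw [edge, map_sub, LinearMap.sub_apply, h₁, h₁]
  have hE₂ : E₂ (edge l y) (edge k x) = sndIncrement R k (k * IsFreeGroup.of x)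
      (l * IsFreeGroup.of y) - sndIncrement R k (k * IsFreeGroup.of x) l := by
    rw [edge, map_sub, LinearMap.sub_apply, h₂, h₂]
  rw [LinearMap.sub_apply, LinearMap.sub_apply, LinearMap.flip_apply, hE₁, hE₂, edgePairing]

end InvariantForm

section Invariance

variable {F : Type} [Group F] [IsFreeGroup F] {R : Subgroup F}
  {B : ℤ[F] →ₗ[ℤ] ℤ[F] →ₗ[ℤ] ℤ[F] ⧸ targetIdeal ⊤ R}
  (hB : ∀ k x l y, B (edge k x) (edge l y) =
    edgePairing R k (k * IsFreeGroup.of x) l (l * IsFreeGroup.of y))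

include hB

theorem form_of_mul_of_mul (g : F) {x y : ℤ[F]} (hx : x ∈ augI (⊤ : Subgroup F))
    (hy : y ∈ augI (⊤ : Subgroup F)) : B (of ℤ F g * x) (of ℤ F g * y) = B x y := by
  refine eqOn_augI_top_of_edge₂ (B' := B)
    (B := B.compl₁₂ (LinearMap.mulLeft ℤ (of ℤ F g)) (LinearMap.mulLeft ℤ (of ℤ F g)))
    (fun k x l y ↦ ?_) hx hy
  rw [LinearMap.compl₁₂_apply, LinearMap.mulLeft_apply, LinearMap.mulLeft_apply, of_mul_edge,
    of_mul_edge, hB, hB, mul_assoc, mul_assoc, edgePairing_mul]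

variable [R.Normal]

theorem form_of_mul_left_of_mem {u : F} (hu : u ∈ R) {x y : ℤ[F]}
    (hx : x ∈ augI (⊤ : Subgroup F)) (hy : y ∈ augI (⊤ : Subgroup F)) :
    B (of ℤ F u * x) y = B x y := by
  refine eqOn_augI_top_of_edge₂ (B := B ∘ₗ LinearMap.mulLeft ℤ (of ℤ F u)) (B' := B)
    (fun k x l y ↦ ?_) hx hy
  rw [LinearMap.comp_apply, LinearMap.mulLeft_apply, of_mul_edge, hB, hB, mul_assoc,
    edgePairing_mul_left_of_mem hu]

theorem form_of_mul_right_of_mem {u : F} (hu : u ∈ R) {x y : ℤ[F]}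
    (hx : x ∈ augI (⊤ : Subgroup F)) (hy : y ∈ augI (⊤ : Subgroup F)) :
    B x (of ℤ F u * y) = B x y := by
  rw [← form_of_mul_left_of_mem hB hu hx (mul_mem_augI_left _ hy), form_of_mul_of_mul hB u hx hy]

theorem form_eq_zero_right {x y : ℤ[F]} (hx : x ∈ augI (⊤ : Subgroup F))
    (hy : y ∈ augI R * augI ⊤) : B x y = 0 := by
  have hy' : y ∈ aug R * augI ⊤ := by
    rwa [augI, mul_assoc, top_mul_augI] at hy
  suffices aug R * augI ⊤ ≤ LinearMap.ker (B x) from this hy'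
  refine Submodule.mul_le.2 fun w hw z hz ↦ ?_
  refine eqOn_aug (L := B x ∘ₗ LinearMap.mulRight ℤ z) (L' := 0) (fun u hu ↦ ?_) hw
  rw [LinearMap.comp_apply, LinearMap.mulRight_apply, sub_mul, one_mul, map_sub,
    form_of_mul_right_of_mem hB hu hx hz, sub_self, LinearMap.zero_apply]

end Invariance

section Quadratic

variable {F : Type} [Group F] [IsFreeGroup F] {A : Type*} [AddCommGroup A]

theorem apply_mul_eq_of_increment {B : ℤ[F] →ₗ[ℤ] ℤ[F] →ₗ[ℤ] A}
    (hB : ∀ g, ∀ x ∈ augI (⊤ : Subgroup F), ∀ y ∈ augI (⊤ : Subgroup F),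
      B (of ℤ F g * x) (of ℤ F g * y) = B x y) {Φ : ℤ[F] →ₗ[ℤ] A}
    (hΦ : ∀ k x, Φ (edge k x) = B (of ℤ F k⁻¹ - 1) (of ℤ F (IsFreeGroup.of x) - 1))
    {x y : ℤ[F]} (hx : x ∈ augI (⊤ : Subgroup F)) (hy : y ∈ augI (⊤ : Subgroup F)) :
    Φ (x * y) = B (antipode ℤ x) y := by
  have hf (g : F) : of ℤ F g - 1 ∈ augI (⊤ : Subgroup F) := of_sub_one_mem_augI trivial
  rw [augI_top] at hx
  refine eqOn_aug (L := Φ ∘ₗ LinearMap.mulRight ℤ y) (L' := B.flip y ∘ₗ antipode ℤ)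
    (fun g _ ↦ ?_) hx
  suffices ∀ h x, Φ ((of ℤ F g - 1) * edge h x) = B (of ℤ F g⁻¹ - 1) (edge h x) by
    rw [LinearMap.comp_apply, LinearMap.comp_apply, LinearMap.flip_apply, antipode_of_sub_one]
    exact eqOn_augI_top_of_edge (L := Φ ∘ₗ LinearMap.mulLeft ℤ (of ℤ F g - 1)) this hy
  intro h x
  have hedge : edge h x = of ℤ F h * (of ℤ F (IsFreeGroup.of x) - 1) := by
    rw [edge, map_mul, mul_sub, mul_one]
  have hdiff : of ℤ F h * ((of ℤ F (g * h)⁻¹ - 1) - (of ℤ F h⁻¹ - 1)) = of ℤ F g⁻¹ - 1 := by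
    rw [sub_sub_sub_cancel_right, mul_sub, ← map_mul, ← map_mul, mul_inv_rev,
      mul_inv_cancel_left, mul_inv_cancel, map_one]
  rw [sub_mul, one_mul, of_mul_edge, map_sub, hΦ, hΦ, ← LinearMap.sub_apply, ← map_sub,
    ← hB h _ (sub_mem (hf _) (hf _)) _ (hf _), hdiff, ← hedge]

end Quadratic

section Antipode

variable {F : Type} [Group F] [IsFreeGroup F] {R : Subgroup F} [R.Normal]

theorem antipode_sub_mem_targetIdeal {x : ℤ[F]} (hx : x ∈ aug R * aug R)
    (hx' : x ∈ augI ⊤ * augI R * augI ⊤) : antipode ℤ x - x ∈ targetIdeal ⊤ R := by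
  obtain ⟨B, hedge, hBR⟩ := exists_form_edge_eq_edgePairing R
  obtain ⟨Φ, hΦedge⟩ := exists_linear_primitive fun (k : F) x ↦
    B (of ℤ F k⁻¹ - 1) (of ℤ F (IsFreeGroup.of x) - 1)
  have hΦ {y z : ℤ[F]} (hy : y ∈ augI (⊤ : Subgroup F)) (hz : z ∈ augI (⊤ : Subgroup F)) :
      Φ (y * z) = B (antipode ℤ y) z :=
    apply_mul_eq_of_increment (fun g _ hy _ hz ↦ form_of_mul_of_mul hedge g hy hz) hΦedge hy hz
  have hzero : Φ x = 0 := by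
    rw [mul_assoc] at hx'
    suffices augI ⊤ * (augI R * augI ⊤) ≤ LinearMap.ker Φ from this hx'
    refine Submodule.mul_le.2 fun z hz t ht ↦ ?_
    rw [LinearMap.mem_ker, hΦ hz (mul_augI_le _ _ ht),
      form_eq_zero_right hedge (antipode_mem_augI hz) ht]
  have hsq : Φ x = (targetIdeal ⊤ R).mkQ (antipode ℤ x - x) := by
    rw [aug, Submodule.span_mul_span] at hx
    refine LinearMap.eqOn_span (g := (targetIdeal ⊤ R).mkQ ∘ₗ (antipode ℤ - LinearMap.id)) ?_ hx
    rintro _ ⟨_, ⟨u, hu, rfl⟩, _, ⟨v, hv, rfl⟩, rfl⟩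
    have hf (g : F) : of ℤ F g - 1 ∈ augI (⊤ : Subgroup F) := of_sub_one_mem_augI trivial
    simp only [LinearMap.comp_apply, LinearMap.sub_apply, LinearMap.id_apply]
    rw [hΦ (hf u) (hf v), antipode_of_sub_one, hBR _ (R.inv_mem hu) _ hv, pairing_apply,
      pairing_apply, ← map_sub, antipode_mul_antidistrib, antipode_of_sub_one,
      antipode_of_sub_one, antipode_of_sub_one, inv_inv]
  rw [hsq] at hzero
  exact (Submodule.Quotient.mk_eq_zero _).1 hzero

end Antipode

section AugmentationSquare

variable {F : Type} [Group F]

-- `L` sends `g` to `s(1) s(g)⁻¹ g`, where `s(g)` is the chosen representative of `gR`.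
theorem exists_retraction (R : Subgroup F) :
    ∃ L : ℤ[F] →ₗ[ℤ] ℤ[F], (∀ u ∈ R, L (of ℤ F u) = of ℤ F u) ∧
      (∀ z, ∀ w ∈ aug R, L (z * w) = L z * w) ∧ ∀ x ∈ augI (⊤ : Subgroup F), L x ∈ aug R := by
  let s (g : F) : F := (g : F ⧸ R).out
  have hs (g : F) : (s g)⁻¹ * g ∈ R := QuotientGroup.eq.1 (QuotientGroup.out_eq' _)
  have s_mul (g : F) {u : F} (hu : u ∈ R) : s (g * u) = s g :=
    congrArg Quotient.out (QuotientGroup.mk_mul_of_mem g hu)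
  have s_one : s 1 ∈ R := by simpa using hs 1
  obtain ⟨L, hL⟩ := exists_linearMap_of fun g ↦ of ℤ F (s 1 * ((s g)⁻¹ * g))
  have L_mem (u : F) (hu : u ∈ R) : L (of ℤ F u) = of ℤ F u := by
    have : s u = s 1 := by simpa using s_mul 1 hu
    rw [hL, this, mul_inv_cancel_left]
  refine ⟨L, L_mem, fun z w hw ↦ ?_, fun x hx ↦ ?_⟩
  · refine eqOn_aug (L := L ∘ₗ LinearMap.mulLeft ℤ z) (L' := LinearMap.mulLeft ℤ (L z))
      (fun u hu ↦ ?_) hw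
    suffices L (z * of ℤ F u) = L z * of ℤ F u by
      rw [LinearMap.comp_apply, LinearMap.mulLeft_apply, LinearMap.mulLeft_apply, mul_sub, mul_sub,
        mul_one, mul_one, map_sub, this]
    refine apply_eq_of_forall_of (L := L ∘ₗ LinearMap.mulRight ℤ (of ℤ F u))
      (L' := LinearMap.mulRight ℤ (of ℤ F u) ∘ₗ L) (fun g ↦ ?_) z
    rw [LinearMap.comp_apply, LinearMap.comp_apply, LinearMap.mulRight_apply,
      LinearMap.mulRight_apply, ← map_mul, hL, hL, s_mul g hu, ← map_mul]
    simp only [mul_assoc]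
  · rw [augI_top] at hx
    refine aug_le (P := (aug R).comap L) (fun g _ ↦ ?_) hx
    rw [Submodule.mem_comap, map_sub, ← map_one (of ℤ F), L_mem 1 R.one_mem, hL, map_one]
    exact of_sub_one_mem_aug (R.mul_mem s_one (hs g))

variable {R : Subgroup F} [R.Normal] {a : F}

theorem of_sub_one_mem_aug_mul_aug (ha : of ℤ F a - 1 ∈ augI ⊤ * augI R * augI ⊤) :
    of ℤ F a - 1 ∈ aug R * aug R := by
  have haR : a ∈ R := mem_of_of_sub_one_mem_augI <|
    augI_mul_le R (augI ⊤) (mul_le_mul_left (mul_augI_le (augI ⊤) R) _ ha)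
  have ha' : of ℤ F a - 1 ∈ augI ⊤ * aug R := by
    have h : augI (⊤ : Subgroup F) * augI R * augI ⊤ ≤ augI ⊤ * aug R := by
      calc augI (⊤ : Subgroup F) * augI R * augI ⊤ ≤ augI ⊤ * augI R := by
            rw [mul_assoc]; exact mul_le_mul_right (augI_mul_le _ _) _
        _ = augI ⊤ * (⊤ * aug R) := by rw [top_mul_aug]
        _ = augI ⊤ * aug R := by rw [← mul_assoc, augI_mul_top]
    exact h ha
  obtain ⟨L, hL, hL_mul, hL_mem⟩ := exists_retraction R
  have hLa : L (of ℤ F a - 1) = of ℤ F a - 1 := by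
    rw [map_sub, hL a haR, ← map_one (of ℤ F), hL 1 R.one_mem]
  rw [← hLa]
  suffices augI ⊤ * aug R ≤ (aug R * aug R).comap L from this ha'
  refine Submodule.mul_le.2 fun z hz w hw ↦ ?_
  rw [Submodule.mem_comap, hL_mul z w hw]
  exact Submodule.mul_mem_mul (hL_mem z hz) hw

end AugmentationSquare

section FreeGroup

variable {F : Type} [Group F] {R : Subgroup F} {a : F}

theorem mul_mem_targetIdeal_right {U : Subgroup F} {x : ℤ[F]} (hx : x ∈ targetIdeal U R)
    (z : ℤ[F]) : x * z ∈ targetIdeal U R := by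
  have h : targetIdeal U R * ⊤ = targetIdeal U R := by
    rw [targetIdeal, add_mul, mul_assoc _ _ ⊤, mul_assoc _ _ ⊤, augI_mul_top, augI_mul_top]
  exact h.le (Submodule.mul_mem_mul hx Submodule.mem_top)

variable [IsFreeGroup F] [R.Normal]

theorem of_sq_sub_one_mem_of_isFreeGroup (ha : of ℤ F a - 1 ∈ augI ⊤ * augI R * augI ⊤) :
    of ℤ F (a ^ 2) - 1 ∈ targetIdeal ⊤ R := by
  have hinv : of ℤ F a⁻¹ - of ℤ F a ∈ targetIdeal ⊤ R := by
    have := antipode_sub_mem_targetIdeal (of_sub_one_mem_aug_mul_aug ha) ha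
    rwa [antipode_of_sub_one, sub_sub_sub_cancel_right] at this
  have hsq : of ℤ F (a ^ 2) - 1 = -(of ℤ F a⁻¹ - of ℤ F a) * of ℤ F a := by
    rw [neg_sub, sub_mul, ← map_mul, ← map_mul, inv_mul_cancel, map_one, pow_two]
  rw [hsq]
  exact mul_mem_targetIdeal_right (Submodule.neg_mem _ hinv) _

end FreeGroup

section Restriction

variable {F : Type} [Group F] {U R : Subgroup F}

theorem exists_restriction (U : Subgroup F) :
    ∃ ρ : ℤ[F] →ₗ[ℤ] ℤ[U], (∀ u : U, ρ (of ℤ F u) = of ℤ U u) ∧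
      ∀ (u : U) (x : ℤ[F]), ρ (of ℤ F u * x) = of ℤ U u * ρ x := by
  classical
  obtain ⟨ρ, hρ⟩ := exists_linearMap_of fun g : F ↦
    if hg : g ∈ U then of ℤ U ⟨g, hg⟩ else 0
  refine ⟨ρ, fun u ↦ by rw [hρ, dif_pos u.2], fun u x ↦ ?_⟩
  refine apply_eq_of_forall_of (L := ρ ∘ₗ LinearMap.mulLeft ℤ (of ℤ F u))
    (L' := LinearMap.mulLeft ℤ (of ℤ U u) ∘ₗ ρ) (fun g ↦ ?_) x
  rw [LinearMap.comp_apply, LinearMap.comp_apply, LinearMap.mulLeft_apply,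
    LinearMap.mulLeft_apply, ← map_mul, hρ, hρ]
  by_cases hg : g ∈ U
  · rw [dif_pos hg, dif_pos (U.mul_mem u.2 hg), ← map_mul]
    rfl
  · rw [dif_neg hg, dif_neg (mt (U.mul_mem_cancel_left u.2).1 hg), mul_zero]

theorem map_aug_mul_le {ρ : ℤ[F] →ₗ[ℤ] ℤ[U]}
    (hρ : ∀ (u : U) (x : ℤ[F]), ρ (of ℤ F u * x) = of ℤ U u * ρ x) {N : Subgroup F} (hN : N ≤ U)
    (P : Submodule ℤ ℤ[F]) :
    (aug N * P).map ρ ≤ aug (N.subgroupOf U) * P.map ρ := by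
  refine Submodule.map_le_iff_le_comap.2 (Submodule.mul_le.2 fun w hw x hx ↦ ?_)
  refine aug_le (P := (aug (N.subgroupOf U) * P.map ρ).comap (ρ ∘ₗ LinearMap.mulRight ℤ x))
    (fun n hn ↦ ?_) hw
  have : ρ ((of ℤ F n - 1) * x) = (of ℤ U ⟨n, hN hn⟩ - 1) * ρ x := by
    rw [sub_mul, sub_mul, one_mul, one_mul, map_sub, ← hρ ⟨n, hN hn⟩]
  rw [Submodule.mem_comap, LinearMap.comp_apply, LinearMap.mulRight_apply, this]
  exact Submodule.mul_mem_mul (of_sub_one_mem_aug (Subgroup.mem_subgroupOf.2 hn))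
    (Submodule.mem_map_of_mem hx)

theorem mapDomainAlgHom_of (u : U) :
    mapDomainAlgHom ℤ ℤ U.subtype (of ℤ U u) = of ℤ F u := by
  simp

theorem map_augI_subgroupOf_le (N : Subgroup F) :
    (augI (N.subgroupOf U)).map (mapDomainAlgHom ℤ ℤ U.subtype).toLinearMap ≤ augI N := by
  rw [augI, Submodule.map_mul]
  refine mul_le_mul' (Submodule.map_le_iff_le_comap.2 <| aug_le fun n hn ↦ ?_) le_top
  rw [Submodule.mem_comap, AlgHom.toLinearMap_apply, map_sub, map_one, mapDomainAlgHom_of]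
  exact of_sub_one_mem_aug hn

theorem augI_mul_mul_eq [U.Normal] [R.Normal] :
    augI U * augI R * augI U = aug U * (aug R * (aug U * ⊤)) := by
  calc augI U * augI R * augI U = aug U * (⊤ * augI R) * augI U := by
        rw [augI, mul_assoc (aug U)]
    _ = aug U * (aug R * (⊤ * augI U)) := by
        rw [top_mul_augI, augI, mul_assoc, mul_assoc]
    _ = aug U * (aug R * (aug U * ⊤)) := by rw [top_mul_augI, augI]

theorem of_sub_one_mem_of_coe [U.Normal] [R.Normal] (hRU : R ≤ U) {a : U}
    (ha : of ℤ F a - 1 ∈ augI U * augI R * augI U) :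
    of ℤ U a - 1 ∈ augI ⊤ * augI (R.subgroupOf U) * augI ⊤ := by
  obtain ⟨ρ, hρ_of, hρ_mul⟩ := exists_restriction U
  have hρa : ρ (of ℤ F a - 1) = of ℤ U a - 1 := by
    rw [map_sub, hρ_of, ← map_one (of ℤ F), ← U.coe_one, hρ_of, map_one]
  rw [← hρa]
  suffices (augI U * augI R * augI U).map ρ ≤
      augI ⊤ * augI (R.subgroupOf U) * augI ⊤ from this (Submodule.mem_map_of_mem ha)
  calc (augI U * augI R * augI U).map ρ
      = (aug U * (aug R * (aug U * ⊤))).map ρ := by rw [augI_mul_mul_eq]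
    _ ≤ aug (U.subgroupOf U) * (aug (R.subgroupOf U) *
          (aug (U.subgroupOf U) * (⊤ : Submodule ℤ ℤ[F]).map ρ)) := by
        refine (map_aug_mul_le hρ_mul le_rfl _).trans (mul_le_mul_right ?_ _)
        refine (map_aug_mul_le hρ_mul hRU _).trans (mul_le_mul_right ?_ _)
        exact map_aug_mul_le hρ_mul le_rfl _
    _ ≤ augI ⊤ * (augI (R.subgroupOf U) * augI ⊤) := by
        rw [Subgroup.subgroupOf_self]
        exact mul_le_mul' (aug_le_augI _) <|
          mul_le_mul' (aug_le_augI _) (mul_le_mul_right le_top _)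
    _ = augI ⊤ * augI (R.subgroupOf U) * augI ⊤ := (mul_assoc _ _ _).symm

theorem map_targetIdeal_subgroupOf_le (U R : Subgroup F) :
    (targetIdeal ⊤ (R.subgroupOf U)).map (mapDomainAlgHom ℤ ℤ U.subtype).toLinearMap ≤
      targetIdeal U R := by
  have hU := map_augI_subgroupOf_le (U := U) U
  have hR := map_augI_subgroupOf_le (U := U) R
  rw [Subgroup.subgroupOf_self] at hU
  simp only [targetIdeal, Submodule.add_eq_sup, Submodule.map_sup, Submodule.map_mul]
  gcongr

theorem of_sq_sub_one_mem_targetIdeal [U.Normal] [R.Normal] [IsFreeGroup U] (hRU : R ≤ U) {a : F}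
    (ha : of ℤ F a - 1 ∈ augI U * augI R * augI U) :
    of ℤ F (a ^ 2) - 1 ∈ targetIdeal U R := by
  have haU : a ∈ U := mem_of_of_sub_one_mem_augI (mul_augI_le _ _ ha)
  lift a to U using haU
  have := map_targetIdeal_subgroupOf_le U R <| Submodule.mem_map_of_mem <|
    of_sq_sub_one_mem_of_isFreeGroup (of_sub_one_mem_of_coe hRU ha)
  rwa [AlgHom.toLinearMap_apply, map_sub, map_one, mapDomainAlgHom_of] at this

end Restriction

end Stohr

theorem stohr_square_general_general (F : Type) [Group F] (R S T : Subgroup F) [R.Normal]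
    [S.Normal] [T.Normal] [IsFreeGroup ↥(S ⊔ T)] (hR : R ≤ S ⊔ T) (a : F)
    (ha : (MonoidAlgebra.of ℤ F a) - 1 ∈ augI S * augI R * augI T + augI T * augI R * augI S) :
    (MonoidAlgebra.of ℤ F (a ^ 2)) - 1 ∈
      augI R * augI R * augI S + augI S * augI R * augI R +
        augI T * augI R * augI R + augI R * augI R * augI T := by
  have hS : augI S ≤ augI (S ⊔ T) := Stohr.augI_mono le_sup_left
  have hT : augI T ≤ augI (S ⊔ T) := Stohr.augI_mono le_sup_right
  have hsource : augI S * augI R * augI T + augI T * augI R * augI S ≤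
      augI (S ⊔ T) * augI R * augI (S ⊔ T) := by
    rw [Submodule.add_eq_sup]
    exact sup_le (by gcongr) (by gcongr)
  refine (?_ : Stohr.targetIdeal (S ⊔ T) R ≤ _)
    (Stohr.of_sq_sub_one_mem_targetIdeal hR (hsource ha))
  calc Stohr.targetIdeal (S ⊔ T) R
      ≤ (augI S + augI T) * augI R * augI R + augI R * augI R * (augI S + augI T) := by
        rw [Stohr.targetIdeal]
        gcongr <;> exact Stohr.augI_sup_le S T
    _ = _ := by
        simp only [add_mul, mul_add]
        abel

/-- Theorem 5.3: if `R ⊆ S`, `R ⊆ T` and `a ∈ D(F, 𝐬𝐫𝐭 + 𝐭𝐫𝐬)`,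
then `a² ∈ D(F, 𝐫𝐫𝐬 + 𝐬𝐫𝐫 + 𝐭𝐫𝐫 + 𝐫𝐫𝐭)`. -/
theorem stohr_square_general (F : Type) [Group F] [IsFreeGroup F]
    (R S T : Subgroup F) [R.Normal] [S.Normal] [T.Normal]
    (hRS : R ≤ S) (hRT : R ≤ T) (a : F)
    (ha : (MonoidAlgebra.of ℤ F a) - 1 ∈ augI S * augI R * augI T + augI T * augI R * augI S) :
    (MonoidAlgebra.of ℤ F (a ^ 2)) - 1 ∈
      augI R * augI R * augI S + augI S * augI R * augI R +
        augI T * augI R * augI R + augI R * augI R * augI T :=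
  stohr_square_general_general F R S T (hRS.trans le_sup_left) a ha
end

section
/- Let F be a free group and R, S, T normal subgroups of F with R ⊆ S and R ⊆ T, and let 𝐫, 𝐬, 𝐭 be the two-sided ideals of ℤ[F] generated by the augmentation ideals of R, S, T. If a ∈ D(F, 𝐬𝐫𝐬 + 𝐭𝐫𝐭), then a² ∈ D(F, 𝐫𝐫𝐬 + 𝐬𝐫𝐫 + 𝐫𝐫𝐭 + 𝐭𝐫𝐫) and a⁴ ∈ [R, R, ST], where [R,R,ST] = [[R,R],ST] and ST is the subgroup generated by S and T. -/
/-!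
Put `U = ST` and `𝐟 = Δ(F)`, so that `𝐬𝐫𝐬 + 𝐭𝐫𝐭 ⊆ 𝐮𝐫𝐟`.  A `ℤ`-linear functional on `ℤ[F]` kills
`𝐮𝐫𝐟` as soon as its values `φ g` satisfy `φ (v s k) - φ (v k) = P v s + Q s k` for `v ∈ U`,
`s ∈ R`, `k ∈ F`.

Let `q` be a quadratic map on `R` whose deviation `q (r s) - q r - q s` is bilinear and invariant
under conjugation by `U`, and let `w g` be a representative of the coset `R g`.  Then
`φ g = q (g w⁻¹) - q (g⁻¹ w)`, `w = w g`, has the above property on `U`: the two deviation terms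
that occur are `dev s ρ` and `dev s⁻¹ ρ⁻¹`, and they cancel.  Hence `a - 1 ∈ 𝐮𝐫𝐟` forces
`q a = q a⁻¹`.

* For `q r = r - 1` modulo `𝐫𝐫𝐮 + 𝐮𝐫𝐫` this reads `a - a⁻¹ ∈ 𝐫𝐫𝐮 + 𝐮𝐫𝐫`, which is the claim on `a²`.
* If `R` is free, let `r ↦ r*` reverse words in a basis of `R` and let `q r` be the class of
  `r* r⁻¹` in `[R, R] / [R, R, U]`.  On `[R, R]` it is minus twice the class of `r`, so
  `q a = q a⁻¹` reads `a⁴ ∈ [R, R, U]`, because the simpler functional `g ↦ g w⁻¹ ∈ R / [R, R]`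
  already shows `a ∈ [R, R]`.
-/

section GroupTheory

open scoped commutatorElement

universe u v

variable {G : Type u} {A : Type v} [Group G]

theorem exists_rightCoset_section (N : Subgroup G) :
    ∃ w : G → G, w 1 = 1 ∧ (∀ g, g * (w g)⁻¹ ∈ N) ∧ ∀ n ∈ N, ∀ g, w (n * g) = w g := by
  let rep (g : G) : G := Quotient.out (Quotient.mk (QuotientGroup.rightRel N) g)
  have rep_mem (g : G) : g * (rep g)⁻¹ ∈ N :=
    QuotientGroup.rightRel_apply.1 (Quotient.mk_out (s := QuotientGroup.rightRel N) g)
  refine ⟨fun g => (rep 1)⁻¹ * rep g, inv_mul_cancel _, fun g => ?_, fun n hn g => ?_⟩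
  · have h := N.mul_mem (rep_mem g) (N.inv_mem (rep_mem 1))
    simpa [mul_assoc] using h
  · have h : rep (n * g) = rep g :=
      congrArg Quotient.out (Quotient.sound (QuotientGroup.rightRel_apply.2 (by simpa using hn)))
    exact congrArg ((rep 1)⁻¹ * ·) h

variable [AddCommGroup A]

/-- `κ` restricts to a homomorphism from `C` to the additive group `A` which is invariant under
conjugation by `U`.  It is a function on the whole group so that no coercions from `C` are needed;
its values outside `C` are irrelevant. -/
structure IsInvariantHomOn (C U : Subgroup G) (κ : G → A) : Prop where
  map_mul : ∀ x ∈ C, ∀ y ∈ C, κ (x * y) = κ x + κ y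
  map_conj : ∀ u ∈ U, ∀ x ∈ C, κ (u * x * u⁻¹) = κ x

namespace IsInvariantHomOn

variable {C U : Subgroup G} {κ : G → A}

theorem map_one (hκ : IsInvariantHomOn C U κ) : κ 1 = 0 := by
  simpa using hκ.map_mul 1 C.one_mem 1 C.one_mem

theorem map_inv (hκ : IsInvariantHomOn C U κ) {x : G} (hx : x ∈ C) : κ x⁻¹ = -κ x := by
  have h := hκ.map_mul x⁻¹ (C.inv_mem hx) x hx
  rw [inv_mul_cancel, hκ.map_one] at h
  exact eq_neg_of_add_eq_zero_left h.symm

theorem map_pow (hκ : IsInvariantHomOn C U κ) {x : G} (hx : x ∈ C) (n : ℕ) :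
    κ (x ^ n) = n • κ x := by
  induction n with
  | zero => simpa using hκ.map_one
  | succ n ih => rw [pow_succ, hκ.map_mul _ (C.pow_mem hx n) x hx, ih, succ_nsmul]

end IsInvariantHomOn

theorem exists_isInvariantHomOn {C U : Subgroup G} [C.Normal] [U.Normal] (hCU : C ≤ U) :
    ∃ (A : Type u) (_ : AddCommGroup A) (κ : G → A),
      IsInvariantHomOn C U κ ∧ ∀ x ∈ C, κ x = 0 → x ∈ ⁅C, U⁆ := by
  let N := ⁅C, U⁆.subgroupOf C
  have hN : commutator C ≤ N := by
    rw [commutator_def, Subgroup.commutator_le]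
    intro x _ y _
    exact Subgroup.commutator_mem_commutator x.2 (hCU y.2)
  let _ : CommGroup (C ⧸ N) :=
    { mul_comm := (Subgroup.Normal.quotient_commutative_iff_commutator_le.2 hN).is_comm.comm }
  let κ : G → Additive (C ⧸ N) :=
    Function.extend Subtype.val (fun x : C => Additive.ofMul (x : C ⧸ N)) 0
  have κ_coe (x : C) : κ x = Additive.ofMul (x : C ⧸ N) := Subtype.val_injective.extend_apply _ _ x
  refine ⟨_, inferInstance, κ, ⟨fun x hx y hy => ?_, fun u hu x hx => ?_⟩, fun x hx h => ?_⟩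
  · exact (κ_coe (⟨x, hx⟩ * ⟨y, hy⟩)).trans
      (congrArg₂ (· + ·) (κ_coe ⟨x, hx⟩) (κ_coe ⟨y, hy⟩)).symm
  · rw [κ_coe ⟨u * x * u⁻¹, ‹C.Normal›.conj_mem x hx u⟩, κ_coe ⟨x, hx⟩]
    refine congrArg Additive.ofMul (QuotientGroup.eq.2 ?_)
    have h := Subgroup.commutator_mem_commutator hu (C.inv_mem hx)
    rw [Subgroup.commutator_comm] at h
    simpa [N, Subgroup.mem_subgroupOf, commutatorElement_def, mul_assoc] using h
  · rw [κ_coe ⟨x, hx⟩] at h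
    exact (QuotientGroup.eq_one_iff (N := N) ⟨x, hx⟩).1 h

/-- The failure of `q` to be a homomorphism. -/
def deviation (q : G → A) (x y : G) : A := q (x * y) - q x - q y

theorem map_mul_eq_add_deviation (q : G → A) (x y : G) :
    q (x * y) = q x + q y + deviation q x y := by
  unfold deviation; abel

theorem deviation_cocycle (q : G → A) (x y z : G) :
    deviation q x y + deviation q (x * y) z = deviation q y z + deviation q x (y * z) := by
  unfold deviation; rw [mul_assoc]; abel

/-- `q` is a quadratic map on `R` whose deviation is invariant under conjugation by `U`.  Additivity
of the deviation in the second variable is `IsQuadraticOn.deviation_mul_right`. -/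
structure IsQuadraticOn (R U : Subgroup G) (q : G → A) : Prop where
  deviation_mul_left : ∀ r ∈ R, ∀ s ∈ R, ∀ t ∈ R,
    deviation q (r * s) t = deviation q r t + deviation q s t
  deviation_conj : ∀ u ∈ U, ∀ r ∈ R, ∀ s ∈ R,
    deviation q (u * r * u⁻¹) (u * s * u⁻¹) = deviation q r s

namespace IsQuadraticOn

variable {R U : Subgroup G} {q : G → A}

theorem deviation_mul_right (hq : IsQuadraticOn R U q) {r s t : G} (hr : r ∈ R) (hs : s ∈ R)
    (ht : t ∈ R) : deviation q r (s * t) = deviation q r s + deviation q r t := by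
  have h := deviation_cocycle q r s t
  rw [hq.deviation_mul_left r hr s hs t ht, ← add_assoc, add_comm (deviation q s t)] at h
  exact (add_right_cancel h).symm

theorem deviation_one_left (hq : IsQuadraticOn R U q) {s : G} (hs : s ∈ R) :
    deviation q 1 s = 0 := by
  simpa using hq.deviation_mul_left 1 R.one_mem 1 R.one_mem s hs

theorem map_one (hq : IsQuadraticOn R U q) : q 1 = 0 := by
  simpa [deviation] using hq.deviation_one_left R.one_mem

theorem deviation_inv_left (hq : IsQuadraticOn R U q) {r s : G} (hr : r ∈ R) (hs : s ∈ R) :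
    deviation q r⁻¹ s = -deviation q r s := by
  have h := hq.deviation_mul_left r⁻¹ (R.inv_mem hr) r hr s hs
  rw [inv_mul_cancel, hq.deviation_one_left hs] at h
  exact eq_neg_of_add_eq_zero_left h.symm

theorem deviation_inv_right (hq : IsQuadraticOn R U q) {r s : G} (hr : r ∈ R) (hs : s ∈ R) :
    deviation q r s⁻¹ = -deviation q r s := by
  have h := hq.deviation_mul_right hr (R.inv_mem hs) hs
  have h₁ : deviation q r 1 = 0 := by
    simpa using hq.deviation_mul_right hr R.one_mem R.one_mem
  rw [inv_mul_cancel, h₁] at h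
  exact eq_neg_of_add_eq_zero_left h.symm

theorem deviation_inv_inv (hq : IsQuadraticOn R U q) {r s : G} (hr : r ∈ R) (hs : s ∈ R) :
    deviation q r⁻¹ s⁻¹ = deviation q r s := by
  rw [hq.deviation_inv_left hr (R.inv_mem hs), hq.deviation_inv_right hr hs, neg_neg]

theorem map_conj_mul (hq : IsQuadraticOn R U q) {u r s : G} (hu : u ∈ U) (hr : r ∈ R)
    (hs : s ∈ R) :
    q (u * (r * s) * u⁻¹) = q (u * r * u⁻¹) + q (u * s * u⁻¹) + deviation q r s := by
  rw [← hq.deviation_conj u hu r hr s hs, ← map_mul_eq_add_deviation]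
  exact congrArg q (by group)

theorem deviation_commutator_left (hq : IsQuadraticOn R U q) {c s : G} (hc : c ∈ ⁅R, R⁆)
    (hs : s ∈ R) : deviation q c s = 0 := by
  have hle : ⁅R, R⁆ ≤ R := R.commutator_le_self
  induction hc using Subgroup.closure_induction with
  | mem c hc =>
    obtain ⟨x, hx, y, hy, rfl⟩ := hc
    have hx' := R.inv_mem hx
    rw [commutatorElement_def,
      hq.deviation_mul_left _ (mul_mem (mul_mem hx hy) hx') _ (inv_mem hy) s hs,
      hq.deviation_mul_left _ (mul_mem hx hy) _ hx' s hs, hq.deviation_mul_left x hx y hy s hs,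
      hq.deviation_inv_left hx hs, hq.deviation_inv_left hy hs]
    abel
  | one => exact hq.deviation_one_left hs
  | mul x y hx hy ihx ihy =>
    rw [hq.deviation_mul_left x (hle hx) y (hle hy) s hs, ihx, ihy, add_zero]
  | inv x hx ihx => rw [hq.deviation_inv_left (hle hx) hs, ihx, neg_zero]

theorem map_mul_of_mem_commutator (hq : IsQuadraticOn R U q) {c s : G} (hc : c ∈ ⁅R, R⁆)
    (hs : s ∈ R) : q (c * s) = q c + q s := by
  rw [map_mul_eq_add_deviation q, hq.deviation_commutator_left hc hs, add_zero]

theorem map_inv_of_mem_commutator (hq : IsQuadraticOn R U q) {c : G} (hc : c ∈ ⁅R, R⁆) :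
    q c⁻¹ = -q c := by
  have h := hq.map_mul_of_mem_commutator (inv_mem hc) (R.commutator_le_self hc)
  rw [inv_mul_cancel, hq.map_one] at h
  exact eq_neg_of_add_eq_zero_left h.symm

theorem map_commutatorElement (hq : IsQuadraticOn R U q) {r s : G} (hr : r ∈ R) (hs : s ∈ R) :
    q ⁅r, s⁆ = deviation q r s - deviation q s r := by
  have h : q (r * s) = q ⁅r, s⁆ + q (s * r) := by
    rw [← hq.map_mul_of_mem_commutator (Subgroup.commutator_mem_commutator hr hs) (mul_mem hs hr)]
    exact congrArg q (by group)
  rw [← sub_eq_iff_eq_add.2 h]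
  unfold deviation; abel

end IsQuadraticOn

/-! ### Word reversal in a free group -/

theorem exists_reversal (G : Type*) [Group G] [IsFreeGroup G] :
    ∃ rev : G → G, (∀ x y, rev (x * y) = rev y * rev x) ∧ ∀ x, rev x * x⁻¹ ∈ commutator G := by
  let ρ : G →* Gᵐᵒᵖ := IsFreeGroup.lift fun i => MulOpposite.op (IsFreeGroup.of i)
  let ab : Gᵐᵒᵖ →* Abelianization G :=
    { toFun := fun x => Abelianization.of x.unop
      map_one' := rfl
      map_mul' := fun x y => by rw [MulOpposite.unop_mul, map_mul, mul_comm] }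
  have hab : ab.comp ρ = Abelianization.of := IsFreeGroup.ext_hom fun i => by
    rw [MonoidHom.comp_apply, IsFreeGroup.lift_of]; rfl
  refine ⟨fun x => (ρ x).unop, fun x y => by simp, fun x => ?_⟩
  have h : Abelianization.of (ρ x).unop = Abelianization.of x := DFunLike.congr_fun hab x
  rw [← Abelianization.ker_of, MonoidHom.mem_ker, map_mul, map_inv, h, mul_inv_cancel]

/-- The identities satisfied by `c r = r* r⁻¹` for `r ∈ R`, where `r*` is the reversal of the word
`r` in a basis of `R`. -/
structure IsReversalDefectOn (R : Subgroup G) (c : G → G) : Prop where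
  mem_commutator : ∀ r ∈ R, c r ∈ ⁅R, R⁆
  map_mul : ∀ r ∈ R, ∀ s ∈ R, c (r * s) = c s * (s * c r * s⁻¹) * ⁅s, r⁆

theorem exists_isReversalDefectOn (R : Subgroup G) [IsFreeGroup R] :
    ∃ c : G → G, IsReversalDefectOn R c := by
  obtain ⟨rev, rev_mul, rev_mem⟩ := exists_reversal R
  let c : G → G := Function.extend Subtype.val (fun r : R => ((rev r * r⁻¹ : R) : G)) 1
  have c_coe (r : R) : c r = rev r * (r : G)⁻¹ := Subtype.val_injective.extend_apply _ _ r
  refine ⟨c, fun r hr => ?_, fun r hr s hs => ?_⟩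
  · rw [c_coe ⟨r, hr⟩, ← Subgroup.map_subtype_commutator]
    exact Subgroup.mem_map_of_mem R.subtype (rev_mem ⟨r, hr⟩)
  · rw [c_coe ⟨r, hr⟩, c_coe ⟨s, hs⟩, show r * s = ((⟨r, hr⟩ * ⟨s, hs⟩ : R) : G) from rfl, c_coe,
      rev_mul]
    simp [commutatorElement_def, mul_assoc]

variable {R U : Subgroup G} {κ : G → A} {c : G → G}

theorem IsInvariantHomOn.map_commutatorElement_mul_right (hκ : IsInvariantHomOn ⁅R, R⁆ U κ)
    (hRU : R ≤ U) {s x y : G} (hs : s ∈ R) (hx : x ∈ R) (hy : y ∈ R) :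
    κ ⁅s, x * y⁆ = κ ⁅s, x⁆ + κ ⁅s, y⁆ := by
  have hsx := Subgroup.commutator_mem_commutator hs hx
  have hsy := Subgroup.commutator_mem_commutator hs hy
  have h : ⁅s, x * y⁆ = ⁅s, x⁆ * (x * ⁅s, y⁆ * x⁻¹) := by
    simp only [commutatorElement_mul_right_eq_mul_conj, mul_assoc]
  have hconj : x * ⁅s, y⁆ * x⁻¹ ∈ ⁅R, R⁆ := by
    rw [← Subgroup.mul_mem_cancel_left _ hsx, ← h]
    exact Subgroup.commutator_mem_commutator hs (mul_mem hx hy)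
  rw [h, hκ.map_mul _ hsx _ hconj, hκ.map_conj x (hRU hx) _ hsy]

namespace IsReversalDefectOn

variable [R.Normal]

theorem deviation_comp (hc : IsReversalDefectOn R c) (hκ : IsInvariantHomOn ⁅R, R⁆ U κ)
    (hRU : R ≤ U) {r s : G} (hr : r ∈ R) (hs : s ∈ R) :
    deviation (κ ∘ c) r s = κ ⁅s, r⁆ := by
  have hcr := hc.mem_commutator r hr
  have hcs := hc.mem_commutator s hs
  have hconj : s * c r * s⁻¹ ∈ ⁅R, R⁆ := (Subgroup.commutator_normal R R).conj_mem _ hcr s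
  simp only [deviation, Function.comp_apply]
  rw [hc.map_mul r hr s hs,
    hκ.map_mul _ (mul_mem hcs hconj) _ (Subgroup.commutator_mem_commutator hs hr),
    hκ.map_mul _ hcs _ hconj, hκ.map_conj s (hRU hs) _ hcr]
  abel

theorem isQuadraticOn_comp (hc : IsReversalDefectOn R c) (hκ : IsInvariantHomOn ⁅R, R⁆ U κ)
    (hRU : R ≤ U) : IsQuadraticOn R U (κ ∘ c) := by
  refine ⟨fun r hr s hs t ht => ?_, fun u hu r hr s hs => ?_⟩
  · rw [hc.deviation_comp hκ hRU (mul_mem hr hs) ht, hc.deviation_comp hκ hRU hr ht,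
      hc.deviation_comp hκ hRU hs ht, hκ.map_commutatorElement_mul_right hRU ht hr hs]
  · have conj_mem {x : G} (hx : x ∈ R) : u * x * u⁻¹ ∈ R := ‹R.Normal›.conj_mem x hx u
    rw [hc.deviation_comp hκ hRU (conj_mem hr) (conj_mem hs), hc.deviation_comp hκ hRU hr hs,
      ← conjugate_commutatorElement, hκ.map_conj u hu _ (Subgroup.commutator_mem_commutator hs hr)]

theorem comp_of_mem_commutator (hc : IsReversalDefectOn R c) (hκ : IsInvariantHomOn ⁅R, R⁆ U κ)
    (hRU : R ≤ U) {a : G} (ha : a ∈ ⁅R, R⁆) : (κ ∘ c) a = -(2 • κ a) := by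
  have hq : IsQuadraticOn R U (κ ∘ c) := hc.isQuadraticOn_comp hκ hRU
  induction ha using Subgroup.closure_induction with
  | mem _ h =>
    obtain ⟨x, hx, y, hy, rfl⟩ := h
    rw [hq.map_commutatorElement hx hy, hc.deviation_comp hκ hRU hx hy,
      hc.deviation_comp hκ hRU hy hx, ← commutatorElement_inv x y,
      hκ.map_inv (Subgroup.commutator_mem_commutator hx hy)]
    abel
  | one => rw [hq.map_one, hκ.map_one, smul_zero, neg_zero]
  | mul x y hx hy ihx ihy =>
    rw [hq.map_mul_of_mem_commutator hx (R.commutator_le_self hy), ihx, ihy, hκ.map_mul x hx y hy]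
    abel
  | inv x hx ihx => rw [hq.map_inv_of_mem_commutator hx, ihx, hκ.map_inv hx, smul_neg]

end IsReversalDefectOn

end GroupTheory

/-! ### Ideals of the group ring -/

section GroupRing

open MonoidAlgebra

theorem top_mul_top_eq (k B : Type*) [CommSemiring k] [Semiring B] [Algebra k B] :
    (⊤ : Submodule k B) * ⊤ = ⊤ :=
  top_unique fun x hx => mul_one x ▸ Submodule.mul_mem_mul hx Submodule.mem_top

theorem span_range_of (k G : Type*) [Semiring k] [MulOneClass G] :
    Submodule.span k (Set.range (of k G)) = ⊤ := by
  have h : ⇑(of k G) = MonoidAlgebra.basis G k := by ext1 g; simp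
  rw [h, (MonoidAlgebra.basis G k).span_eq]

variable {F : Type} [Group F]

theorem sub_one_mem_augI {N : Subgroup F} {n : F} (hn : n ∈ N) : of ℤ F n - 1 ∈ augI N := by
  have h : of ℤ F n - 1 ∈ aug N := Submodule.subset_span ⟨n, hn, rfl⟩
  exact mul_one (of ℤ F n - 1) ▸ Submodule.mul_mem_mul h Submodule.mem_top

theorem augI_mul_top (N : Subgroup F) : augI N * ⊤ = augI N := by
  rw [augI, mul_assoc, top_mul_top_eq]

theorem mul_mem_augI {N : Subgroup F} {x : MonoidAlgebra ℤ F} (hx : x ∈ augI N)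
    (y : MonoidAlgebra ℤ F) : x * y ∈ augI N :=
  augI_mul_top N ▸ Submodule.mul_mem_mul hx Submodule.mem_top

theorem augI_mono {N N' : Subgroup F} (h : N ≤ N') : augI N ≤ augI N' :=
  mul_le_mul' (Submodule.span_mono fun _ ⟨n, hn, hx⟩ => ⟨n, h hn, hx⟩) le_rfl

theorem augI_sup (S T : Subgroup F) [S.Normal] : augI (S ⊔ T) = augI S + augI T := by
  refine le_antisymm ?_ (sup_le (augI_mono le_sup_left) (augI_mono le_sup_right))
  have h : aug (S ⊔ T) ≤ augI S + augI T := by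
    refine Submodule.span_le.2 ?_
    rintro _ ⟨_, hn, rfl⟩
    obtain ⟨s, hs, t, ht, rfl⟩ := Subgroup.mem_sup_of_normal_left.1 hn
    have e : of ℤ F (s * t) - 1 = (of ℤ F s - 1) * of ℤ F t + (of ℤ F t - 1) := by
      rw [map_mul]; noncomm_ring
    rw [e]
    exact Submodule.add_mem_sup (mul_mem_augI (sub_one_mem_augI hs) _) (sub_one_mem_augI ht)
  calc augI (S ⊔ T) = aug (S ⊔ T) * ⊤ := rfl
    _ ≤ (augI S + augI T) * ⊤ := mul_le_mul' h le_rfl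
    _ = augI S + augI T := by rw [add_mul, augI_mul_top, augI_mul_top]

theorem augI_srs_add_trt_le (R S T : Subgroup F) :
    augI S * augI R * augI S + augI T * augI R * augI T ≤ augI (S ⊔ T) * augI R * augI ⊤ :=
  sup_le (mul_le_mul' (mul_le_mul' (augI_mono le_sup_left) le_rfl) (augI_mono le_top))
    (mul_le_mul' (mul_le_mul' (augI_mono le_sup_right) le_rfl) (augI_mono le_top))

theorem top_mul_aug_le (N : Subgroup F) [hN : N.Normal] : ⊤ * aug N ≤ aug N * ⊤ := by
  rw [← span_range_of, aug, Submodule.span_mul_span, Submodule.span_le]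
  rintro _ ⟨_, ⟨g, rfl⟩, _, ⟨n, hn, rfl⟩, rfl⟩
  have e : of ℤ F g * (of ℤ F n - 1) = (of ℤ F (g * n * g⁻¹) - 1) * of ℤ F g := by
    rw [mul_sub, sub_mul, ← map_mul, ← map_mul, inv_mul_cancel_right, one_mul, mul_one]
  change of ℤ F g * (of ℤ F n - 1) ∈ _
  rw [e]
  exact Submodule.mul_mem_mul (Submodule.subset_span ⟨_, hN.conj_mem n hn g, rfl⟩)
    (Submodule.subset_span ⟨g, rfl⟩)

theorem augI_mul_augI_le (M N : Subgroup F) [N.Normal] : augI M * augI N ≤ aug M * augI N :=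
  calc aug M * ⊤ * (aug N * ⊤) = aug M * (⊤ * aug N * ⊤) := by simp only [mul_assoc]
    _ ≤ aug M * (aug N * ⊤ * ⊤) := mul_le_mul' le_rfl (mul_le_mul' (top_mul_aug_le N) le_rfl)
    _ = aug M * augI N := by rw [mul_assoc (aug N), top_mul_top_eq, augI]

theorem augI_mul_augI_mul_augI_le_span (L M N : Subgroup F) [M.Normal] [N.Normal] :
    augI L * augI M * augI N ≤ Submodule.span ℤ
      {x | ∃ l ∈ L, ∃ m ∈ M, ∃ n ∈ N, ∃ g,
        x = (of ℤ F l - 1) * (of ℤ F m - 1) * (of ℤ F n - 1) * of ℤ F g} := by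
  have h : augI L * augI M * augI N ≤ aug L * aug M * aug N * ⊤ :=
    calc augI L * augI M * augI N ≤ aug L * augI M * augI N :=
          mul_le_mul' (augI_mul_augI_le L M) le_rfl
      _ = aug L * (augI M * augI N) := mul_assoc _ _ _
      _ ≤ aug L * (aug M * augI N) := mul_le_mul' le_rfl (augI_mul_augI_le M N)
      _ = aug L * aug M * aug N * ⊤ := by simp only [augI, mul_assoc]
  refine h.trans ?_
  rw [← span_range_of]
  simp only [aug, Submodule.span_mul_span]
  refine Submodule.span_mono ?_
  rintro _ ⟨_, ⟨_, ⟨_, ⟨l, hl, rfl⟩, _, ⟨m, hm, rfl⟩, rfl⟩, _, ⟨n, hn, rfl⟩, rfl⟩, _, ⟨g, rfl⟩, rfl⟩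
  exact ⟨l, hl, m, hm, n, hn, g, rfl⟩

variable {A : Type*} [AddCommGroup A] {R U : Subgroup F}

/-- The ideal `𝐫𝐫𝐮 + 𝐮𝐫𝐫`. -/
noncomputable def rruAddUrr (R U : Subgroup F) : Submodule ℤ (MonoidAlgebra ℤ F) :=
  augI R * augI R * augI U + augI U * augI R * augI R

theorem mul_mem_rruAddUrr {x : MonoidAlgebra ℤ F} (hx : x ∈ rruAddUrr R U)
    (y : MonoidAlgebra ℤ F) : x * y ∈ rruAddUrr R U := by
  have h := Submodule.mul_mem_mul hx (Submodule.mem_top (R := ℤ) (x := y))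
  rwa [rruAddUrr, add_mul, mul_assoc _ (augI U), augI_mul_top,
    mul_assoc _ (augI R) ⊤, augI_mul_top] at h

theorem deviation_map_of_sub_one (f : MonoidAlgebra ℤ F →ₗ[ℤ] A) (x y : F) :
    deviation (fun g => f (of ℤ F g - 1)) x y = f ((of ℤ F x - 1) * (of ℤ F y - 1)) := by
  simp only [deviation, ← map_sub]
  rw [map_mul]
  exact congrArg f (by noncomm_ring)

theorem conj_mul_conj_sub_mul {B : Type*} [Ring B] {u u' : B} (h : u' * u = 1) (x y : B) :
    u * x * u' * (u * y * u') - x * y = (u - 1) * x * (y * u') + x * y * (u' - 1) := by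
  have e : u * x * u' * (u * y * u') = u * x * (u' * u) * (y * u') := by simp only [mul_assoc]
  rw [e, h]
  noncomm_ring

theorem isQuadraticOn_mkQ_sub_one (hRU : R ≤ U) :
    IsQuadraticOn R U fun g => (rruAddUrr R U).mkQ (of ℤ F g - 1) := by
  have mem_rru {r s u : F} (hr : r ∈ R) (hs : s ∈ R) (hu : u ∈ U) :
      (of ℤ F r - 1) * (of ℤ F s - 1) * (of ℤ F u - 1) ∈ rruAddUrr R U :=
    Submodule.mem_sup_left (Submodule.mul_mem_mul (Submodule.mul_mem_mul (sub_one_mem_augI hr)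
      (sub_one_mem_augI hs)) (sub_one_mem_augI hu))
  refine ⟨fun r hr s hs t ht => ?_, fun u hu r hr s hs => ?_⟩
  · simp only [deviation_map_of_sub_one, ← map_add]
    have e : (of ℤ F (r * s) - 1) * (of ℤ F t - 1) -
        ((of ℤ F r - 1) * (of ℤ F t - 1) + (of ℤ F s - 1) * (of ℤ F t - 1)) =
          (of ℤ F r - 1) * (of ℤ F s - 1) * (of ℤ F t - 1) := by
      rw [map_mul]; noncomm_ring
    exact (Submodule.Quotient.eq _).2 (e ▸ mem_rru hr hs (hRU ht))
  · simp only [deviation_map_of_sub_one]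
    have inv_mul : of ℤ F u⁻¹ * of ℤ F u = 1 := by rw [← map_mul, inv_mul_cancel, map_one]
    have conj_sub_one (x : F) :
        of ℤ F (u * x * u⁻¹) - 1 = of ℤ F u * (of ℤ F x - 1) * of ℤ F u⁻¹ := by
      rw [mul_sub, sub_mul, mul_one, ← map_mul, ← map_mul, ← map_mul, mul_inv_cancel, map_one]
    refine (Submodule.Quotient.eq _).2 ?_
    rw [conj_sub_one, conj_sub_one, conj_mul_conj_sub_mul inv_mul]
    refine add_mem (Submodule.mem_sup_right ?_) (mem_rru hr hs (inv_mem hu))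
    exact Submodule.mul_mem_mul (Submodule.mul_mem_mul (sub_one_mem_augI hu) (sub_one_mem_augI hr))
      (mul_mem_augI (sub_one_mem_augI hs) _)

/-! ### Functionals vanishing on `𝐮𝐫𝐟` -/

variable [R.Normal] {a : F}

theorem apply_eq_apply_one_of_sub_one_mem {φ : F → A} (P Q : F → F → A)
    (hφ : ∀ v ∈ U, ∀ s ∈ R, ∀ k, φ (v * s * k) = φ (v * k) + P v s + Q s k)
    (ha : of ℤ F a - 1 ∈ augI U * augI R * augI ⊤) : φ a = φ 1 := by
  let Φ : MonoidAlgebra ℤ F →ₗ[ℤ] A := (MonoidAlgebra.basis F ℤ).constr ℤ φ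
  have Φ_of (g : F) : Φ (of ℤ F g) = φ g := (MonoidAlgebra.basis F ℤ).constr_basis ℤ φ g
  suffices h : augI U * augI R * augI ⊤ ≤ LinearMap.ker Φ by
    have h₀ : Φ (of ℤ F a - 1) = 0 := h ha
    rwa [← map_one (of ℤ F), map_sub, Φ_of, Φ_of, sub_eq_zero] at h₀
  refine (augI_mul_augI_mul_augI_le_span U R ⊤).trans (Submodule.span_le.2 ?_)
  rintro _ ⟨v, hv, s, hs, x, -, g, rfl⟩
  have e : (of ℤ F v - 1) * (of ℤ F s - 1) * (of ℤ F x - 1) * of ℤ F g =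
      (of ℤ F (v * s * (x * g)) - of ℤ F (v * (x * g)) - of ℤ F (1 * s * (x * g))
        + of ℤ F (1 * (x * g)))
      - (of ℤ F (v * s * g) - of ℤ F (v * g) - of ℤ F (1 * s * g) + of ℤ F (1 * g)) := by
    simp only [map_mul, map_one]; noncomm_ring
  rw [SetLike.mem_coe, LinearMap.mem_ker, e]
  simp only [map_add, map_sub, Φ_of, hφ v hv s hs, hφ 1 U.one_mem s hs]
  abel

/-- It suffices to control `φ` on `U`: outside `U` it may be redefined as `φ (g (t g)⁻¹)`, where
`t g` is a representative of the coset `U g`. -/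
theorem apply_eq_apply_one_of_sub_one_mem_of_le {φ : F → A} (P Q : F → F → A) (hRU : R ≤ U)
    (hφ : ∀ v ∈ U, ∀ s ∈ R, ∀ k ∈ U, φ (v * s * k) = φ (v * k) + P v s + Q s k) (haU : a ∈ U)
    (ha : of ℤ F a - 1 ∈ augI U * augI R * augI ⊤) : φ a = φ 1 := by
  obtain ⟨t, t_one, t_mem, t_mul⟩ := exists_rightCoset_section U
  have t_of_mem {u : F} (hu : u ∈ U) : t u = 1 := by simpa [t_one] using t_mul u hu 1
  have h := apply_eq_apply_one_of_sub_one_mem (φ := fun g => φ (g * (t g)⁻¹)) P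
    (fun s k => Q s (k * (t k)⁻¹)) (fun v hv s hs k => ?_) ha
  · simpa [t_of_mem haU, t_one] using h
  · have hvs : v * s ∈ U := mul_mem hv (hRU hs)
    rw [t_mul _ hvs, t_mul v hv, mul_assoc (v * s), mul_assoc v k]
    exact hφ v hv s hs _ (t_mem k)

theorem mem_of_sub_one_mem (ha : of ℤ F a - 1 ∈ augI U * augI R * augI ⊤) : a ∈ R := by
  let φ (g : F) : F ⧸ R →₀ ℤ := Finsupp.single (g : F ⧸ R) 1
  have h : φ a = φ 1 := by
    refine apply_eq_apply_one_of_sub_one_mem 0 0 (fun v _ s hs k => ?_) ha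
    have e : ((v * s * k : F) : F ⧸ R) = (v * k : F) := by
      simp [(QuotientGroup.eq_one_iff s).2 hs]
    simp [φ, e]
  exact (QuotientGroup.eq_one_iff a).1 (Finsupp.single_left_injective one_ne_zero h)

theorem IsInvariantHomOn.eq_zero_of_sub_one_mem {κ : F → A} {V : Subgroup F}
    (hκ : IsInvariantHomOn R V κ) (ha : of ℤ F a - 1 ∈ augI U * augI R * augI ⊤) : κ a = 0 := by
  obtain ⟨w, w_one, w_mem, w_mul⟩ := exists_rightCoset_section R
  have w_a : w a = 1 := by simpa [w_one] using w_mul a (mem_of_sub_one_mem ha) 1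
  have h := apply_eq_apply_one_of_sub_one_mem (φ := fun g => κ (g * (w g)⁻¹))
    (fun v s => κ (v * s * v⁻¹)) 0 (fun v _ s hs k => ?_) ha
  · simpa [w_a, w_one, hκ.map_one] using h
  · have hvs : v * s * v⁻¹ ∈ R := ‹R.Normal›.conj_mem s hs v
    have e : v * s * k = v * s * v⁻¹ * (v * k) := by group
    rw [e, w_mul _ hvs, mul_assoc _ (v * k), hκ.map_mul _ hvs _ (w_mem _), Pi.zero_apply,
      Pi.zero_apply, add_zero, add_comm]

theorem mem_commutator_of_sub_one_mem_s15 (ha : of ℤ F a - 1 ∈ augI U * augI R * augI ⊤) :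
    a ∈ ⁅R, R⁆ := by
  obtain ⟨A, _, κ, hκ, κ_eq_zero⟩ := exists_isInvariantHomOn (le_refl R)
  exact κ_eq_zero a (mem_of_sub_one_mem ha) (hκ.eq_zero_of_sub_one_mem ha)

theorem IsQuadraticOn.apply_eq_apply_inv_of_sub_one_mem {q : F → A} (hq : IsQuadraticOn R U q)
    (hRU : R ≤ U) (ha : of ℤ F a - 1 ∈ augI U * augI R * augI ⊤) : q a = q a⁻¹ := by
  obtain ⟨w, w_one, w_mem, w_mul⟩ := exists_rightCoset_section R
  have haR : a ∈ R := mem_of_sub_one_mem ha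
  have w_a : w a = 1 := by simpa [w_one] using w_mul a haR 1
  have h := apply_eq_apply_one_of_sub_one_mem_of_le
    (φ := fun g => q (g * (w g)⁻¹) - q (g⁻¹ * w g))
    (fun v s => q (v * s * v⁻¹)) (fun s k => -q (k⁻¹ * s⁻¹ * k)) hRU ?_ (hRU haR) ha
  · simpa [w_a, w_one, sub_eq_zero] using h
  intro v hv s hs k hk
  have w_eq : w (v * s * k) = w (v * k) := by
    rw [← w_mul _ (‹R.Normal›.conj_mem s hs v) (v * k)]
    exact congrArg w (by group)
  let ρ := k * (w (v * k))⁻¹ * v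
  have hρ : ρ ∈ R := by
    simpa [ρ, mul_assoc] using ‹R.Normal›.conj_mem _ (w_mem (v * k)) v⁻¹
  have h₁ := hq.map_conj_mul hv hs hρ
  have h₂ := hq.map_conj_mul (inv_mem hk) (inv_mem hs) (inv_mem hρ)
  rw [hq.deviation_inv_inv hs hρ] at h₂
  have e₁ : v * (s * ρ) * v⁻¹ = v * s * k * (w (v * k))⁻¹ := by simp [ρ, mul_assoc]
  have e₂ : v * ρ * v⁻¹ = v * k * (w (v * k))⁻¹ := by simp [ρ, mul_assoc]
  have e₃ : k⁻¹ * (s⁻¹ * ρ⁻¹) * k⁻¹⁻¹ = (v * s * k)⁻¹ * w (v * k) := by simp [ρ, mul_assoc]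
  have e₄ : k⁻¹ * ρ⁻¹ * k⁻¹⁻¹ = (v * k)⁻¹ * w (v * k) := by simp [ρ, mul_assoc]
  rw [e₁, e₂] at h₁
  rw [e₃, e₄, inv_inv k] at h₂
  simp only [w_eq, h₁, h₂]
  abel

theorem pow_four_mem_of_sub_one_mem [U.Normal] [IsFreeGroup R] (hRU : R ≤ U)
    (ha : of ℤ F a - 1 ∈ augI U * augI R * augI ⊤) : a ^ 4 ∈ ⁅⁅R, R⁆, U⁆ := by
  have haR : a ∈ ⁅R, R⁆ := mem_commutator_of_sub_one_mem_s15 ha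
  obtain ⟨A, _, κ, hκ, κ_eq_zero⟩ := exists_isInvariantHomOn (R.commutator_le_self.trans hRU)
  obtain ⟨c, hc⟩ := exists_isReversalDefectOn R
  have hq : IsQuadraticOn R U (κ ∘ c) := hc.isQuadraticOn_comp hκ hRU
  have h : (κ ∘ c) a = -(κ ∘ c) a := by
    rw [← hq.map_inv_of_mem_commutator haR]
    exact hq.apply_eq_apply_inv_of_sub_one_mem hRU ha
  rw [hc.comp_of_mem_commutator hκ hRU haR, neg_neg] at h
  refine κ_eq_zero _ (pow_mem haR 4) ?_
  calc κ (a ^ 4) = 4 • κ a := hκ.map_pow haR 4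
    _ = 2 • κ a - -(2 • κ a) := by abel
    _ = 0 := by rw [h]; abel

theorem sq_sub_one_mem_of_sub_one_mem (hRU : R ≤ U)
    (ha : of ℤ F a - 1 ∈ augI U * augI R * augI ⊤) : of ℤ F (a ^ 2) - 1 ∈ rruAddUrr R U := by
  have h := (isQuadraticOn_mkQ_sub_one hRU).apply_eq_apply_inv_of_sub_one_mem hRU ha
  have h' : of ℤ F a - of ℤ F a⁻¹ ∈ rruAddUrr R U := by
    simpa using (Submodule.Quotient.eq _).1 h
  have e : of ℤ F (a ^ 2) - 1 = (of ℤ F a - of ℤ F a⁻¹) * of ℤ F a := by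
    rw [sub_mul, ← map_mul, ← map_mul, inv_mul_cancel, map_one, sq]
  exact e ▸ mul_mem_rruAddUrr h' _

end GroupRing

theorem stohr_srs_trt_general (F : Type) [Group F]
    (R S T : Subgroup F) [R.Normal] [S.Normal] [T.Normal] [IsFreeGroup R]
    (hR : R ≤ S ⊔ T) (a : F)
    (ha : (MonoidAlgebra.of ℤ F a) - 1 ∈ augI (S ⊔ T) * augI R * augI ⊤) :
    ((MonoidAlgebra.of ℤ F (a ^ 2)) - 1 ∈
      augI R * augI R * augI S + augI S * augI R * augI R +
        augI R * augI R * augI T + augI T * augI R * augI R) ∧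
      a ^ 4 ∈ ⁅⁅R, R⁆, S ⊔ T⁆ := by
  refine ⟨?_, pow_four_mem_of_sub_one_mem hR ha⟩
  convert sq_sub_one_mem_of_sub_one_mem hR ha using 1
  rw [rruAddUrr, augI_sup]
  simp only [mul_add, add_mul]
  abel

/-- Theorem 5.4: if `R ⊆ S`, `R ⊆ T` and `a ∈ D(F, 𝐬𝐫𝐬 + 𝐭𝐫𝐭)`,
then `a² ∈ D(F, 𝐫𝐫𝐬 + 𝐬𝐫𝐫 + 𝐫𝐫𝐭 + 𝐭𝐫𝐫)` and `a⁴ ∈ [R, R, ST]`. -/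
theorem stohr_srs_trt (F : Type) [Group F] [IsFreeGroup F]
    (R S T : Subgroup F) [R.Normal] [S.Normal] [T.Normal]
    (hRS : R ≤ S) (hRT : R ≤ T) (a : F)
    (ha : (MonoidAlgebra.of ℤ F a) - 1 ∈ augI S * augI R * augI S + augI T * augI R * augI T) :
    ((MonoidAlgebra.of ℤ F (a ^ 2)) - 1 ∈
      augI R * augI R * augI S + augI S * augI R * augI R +
        augI R * augI R * augI T + augI T * augI R * augI R) ∧
      a ^ 4 ∈ ⁅⁅R, R⁆, S ⊔ T⁆ :=
  stohr_srs_trt_general F R S T (hRS.trans le_sup_left) a (augI_srs_add_trt_le R S T ha)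
end
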